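/- Fix an integer d ≥ 2 and set C_d = 1 + (d−1)/d^{d/(d−1)}. For every ε > 0: (i) there exists N ∈ ℕ such that q^{(d)}(n) ≤ (C_d · 2^ε)^n for every n ≥ N; and (ii) there are infinitely many n ∈ ℕ with q^{(d)}(n) ≥ (C_d · 2^{−ε})^n. (That is, q^{(d)}(n) ≤ C_d^{n+o(n)} for all n, and this is tight up to sub-exponential factors for infinitely many n.) -/

import Mathlib

/-- A `d`-adic distribution on `X_n`: nonnegative, sums to 1, each value `0` or `d^{-ℓ}`, `ℓ ≥ 1`. -/
def IsDadicDist (d n : ℕ) (μ : Fin n → ℝ) : Prop :=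
  (∀ i, 0 ≤ μ i) ∧ (∑ i, μ i) = 1 ∧
  ∀ i, μ i = 0 ∨ ∃ ℓ : ℕ, 1 ≤ ℓ ∧ μ i = ((d : ℝ) ^ ℓ)⁻¹

/-- An ordered partition of `X_n` into `d` pairwise disjoint sets covering `X_n`. -/
def IsOrderedPartition (d n : ℕ) (S : Fin d → Finset (Fin n)) : Prop :=
  (∀ j j', j ≠ j' → Disjoint (S j) (S j')) ∧
  (Finset.univ.biUnion S = Finset.univ)

/-- `S ∈ Div(μ)`: an ordered partition each of whose parts has `μ`-measure `1/d`. -/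
def MemDiv (d n : ℕ) (μ : Fin n → ℝ) (S : Fin d → Finset (Fin n)) : Prop :=
  IsOrderedPartition d n S ∧ ∀ j, (∑ x ∈ S j, μ x) = 1 / (d : ℝ)

/-- A `d`-adic hitter: a collection of ordered partitions meeting `Div(μ)` for
every non-constant `d`-adic distribution `μ` on `X_n`. -/
def IsHitter (d n : ℕ) (Q : Finset (Fin d → Finset (Fin n))) : Prop :=
  (∀ S ∈ Q, IsOrderedPartition d n S) ∧
  ∀ μ : Fin n → ℝ, IsDadicDist d n μ → (∃ i j, μ i ≠ μ j) → ∃ S ∈ Q, MemDiv d n μ S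

/-- `q^{(d)}(n)`: minimum cardinality of a `d`-adic hitter on `X_n`. -/
noncomputable def qd (d n : ℕ) : ℕ :=
  sInf {m | ∃ Q : Finset (Fin d → Finset (Fin n)), IsHitter d n Q ∧ Q.card = m}

/-!
For the upper bound, label the elements of `X_n` by the `d` parts, one of them being the big part.
Fix `p` slightly below `1 / d`. Filling the levels of a `d`-adic distribution `μ` greedily and then
rounding, one finds a division of `μ` in which the big part receives a proportion at least `p` of
every level but the heaviest ones, which have few elements. By concavity of the entropy, the
labelings which split the levels in this way form a proportion at least
`hitterRate p ^ (-n - o(n))` of their type class: give weight `1` to the big part and weight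
`v j * p ^ (p / (1 - p))` to the others, where `∑ j, v j ≤ 1 - p`; these add up to at most
`hitterRate p`. The elements below the first `M = O(log n)` levels all go to the big part, so at
most `(M + 1) ^ n` truncated distributions matter, and by a union bound each of the polynomially
many type classes contains a set, larger than the inverse proportion only by the logarithm of their
number, that divides them all. As `p → 1 / d` the rate tends to `C_d`.

For the lower bound, take `d ^ a - 1` elements of mass `d⁻ᵃ` and let a long thin tail carry the
remaining `d⁻ᵃ`. Divisibility by `d` at the deepest levels forces the whole tail into one part, so
few labelings divide this distribution, and all of them have the same part sizes. Every permutation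
of the distribution must be divided too, and counting permutations bounds the size of a hitter from
below; the best ratio of the part sizes is `d ^ (d / (d - 1))`.
-/

section Counting

open Finset

variable {α ι κ : Type*} [Fintype α] [Fintype ι] [Fintype κ]

theorem factorial_mul_pow_le_factorial_mul_pow_self (a k : ℕ) :
    a.factorial * a ^ k ≤ k.factorial * a ^ a := by
  rcases le_total a k with h | h
  · calc a.factorial * a ^ k = a.factorial * a ^ (k - a) * a ^ a := by
          rw [mul_assoc, ← pow_add, Nat.sub_add_cancel h]
      _ ≤ k.factorial * a ^ a := by gcongr; exact Nat.factorial_mul_pow_sub_le_factorial h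
  · have hdesc : a.factorial = k.factorial * a.descFactorial (a - k) := by
      rw [← Nat.factorial_mul_descFactorial (Nat.sub_le a k), Nat.sub_sub_self h]
    calc a.factorial * a ^ k ≤ k.factorial * a ^ (a - k) * a ^ k := by
          rw [hdesc]; gcongr; exact Nat.descFactorial_le_pow a (a - k)
      _ = k.factorial * a ^ a := by rw [mul_assoc, ← pow_add, Nat.sub_add_cancel h]

theorem multinomial_mul_prod_pow_le_multinomial_mul_prod_pow_self (a k : ι → ℕ)
    (h : ∑ i, k i = ∑ i, a i) :
    Nat.multinomial univ k * ∏ i, a i ^ k i ≤ Nat.multinomial univ a * ∏ i, a i ^ a i := by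
  have hk := Nat.multinomial_spec univ k
  rw [h, ← Nat.multinomial_spec univ a] at hk
  have hprod : (∏ i, (a i).factorial) * ∏ i, a i ^ k i ≤
      (∏ i, (k i).factorial) * ∏ i, a i ^ a i := by
    rw [← prod_mul_distrib, ← prod_mul_distrib]
    exact prod_le_prod' fun i _ => factorial_mul_pow_le_factorial_mul_pow_self (a i) (k i)
  refine Nat.le_of_mul_le_mul_left ?_
    (prod_pos fun i _ => (k i).factorial_pos : 0 < ∏ i, (k i).factorial)
  calc (∏ i, (k i).factorial) * (Nat.multinomial univ k * ∏ i, a i ^ k i)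
      = Nat.multinomial univ a * ((∏ i, (a i).factorial) * ∏ i, a i ^ k i) := by
        rw [← mul_assoc, hk]; ring
    _ ≤ Nat.multinomial univ a * ((∏ i, (k i).factorial) * ∏ i, a i ^ a i) := by gcongr
    _ = (∏ i, (k i).factorial) * (Nat.multinomial univ a * ∏ i, a i ^ a i) := by ring

theorem card_piAntidiag_univ_le [DecidableEq ι] (s : ℕ) :
    #(piAntidiag (univ : Finset ι) s) ≤ (s + 1) ^ Fintype.card ι := by
  calc #(piAntidiag (univ : Finset ι) s) ≤ #(Fintype.piFinset fun _ : ι => range (s + 1)) := by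
        refine card_le_card fun k hk => Fintype.mem_piFinset.2 fun i => ?_
        rw [mem_range, Nat.lt_succ_iff, ← (mem_piAntidiag.1 hk).1]
        exact single_le_sum (fun _ _ => Nat.zero_le _) (mem_univ i)
    _ = (s + 1) ^ Fintype.card ι := by simp

theorem sum_pow_sum_le_multinomial_mul_prod_pow_self (a : ι → ℕ) :
    (∑ i, a i) ^ (∑ i, a i) ≤
      ((∑ i, a i) + 1) ^ Fintype.card ι * (Nat.multinomial univ a * ∏ i, a i ^ a i) := by
  classical
  rw [sum_pow_eq_sum_piAntidiag univ a]
  calc ∑ k ∈ piAntidiag univ (∑ i, a i), Nat.multinomial univ k * ∏ i, a i ^ k i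
      ≤ #(piAntidiag univ (∑ i, a i)) • (Nat.multinomial univ a * ∏ i, a i ^ a i) :=
        sum_le_card_nsmul _ _ _ fun k hk =>
          multinomial_mul_prod_pow_le_multinomial_mul_prod_pow_self a k (mem_piAntidiag.1 hk).1
    _ ≤ _ := by rw [smul_eq_mul]; gcongr; exact card_piAntidiag_univ_le _

variable [DecidableEq α] [DecidableEq ι] [DecidableEq κ]

/-- The type class of `c`, in the sense of the method of types: the labelings of `α` which use each
label `j` exactly `c j` times. -/
def typeClass (α : Type*) [Fintype α] [DecidableEq α] (c : κ → ℕ) : Finset (α → κ) :=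
  {f | ∀ j, #{x | f x = j} = c j}

/-- The conditional type class of `a` given `code`: the labelings which, among the elements of code
`i`, use each label `j` exactly `a i j` times. -/
def condTypeClass (code : α → ι) (a : ι → κ → ℕ) : Finset (α → κ) :=
  {f | ∀ i j, #{x | code x = i ∧ f x = j} = a i j}

/-- The total weight of a type class of labelings of type `a` when label `j` has weight `w j`. -/
noncomputable def typeWeight (w : κ → ℝ) (a : κ → ℕ) : ℝ :=
  Nat.multinomial univ a * ∏ j, w j ^ a j

@[simp]
theorem mem_typeClass {c : κ → ℕ} {f : α → κ} :
    f ∈ typeClass α c ↔ ∀ j, #{x | f x = j} = c j := by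
  simp [typeClass]

@[simp]
theorem mem_condTypeClass {code : α → ι} {a : ι → κ → ℕ} {f : α → κ} :
    f ∈ condTypeClass code a ↔ ∀ i j, #{x | code x = i ∧ f x = j} = a i j := by
  simp [condTypeClass]

omit [DecidableEq κ] in
theorem typeWeight_nonneg {w : κ → ℝ} (hw : ∀ j, 0 ≤ w j) (a : κ → ℕ) : 0 ≤ typeWeight w a :=
  mul_nonneg (Nat.cast_nonneg _) (prod_nonneg fun j _ => pow_nonneg (hw j) _)

theorem card_perm_comp_eq_le (f g : α → κ) :
    #{σ : Equiv.Perm α | f ∘ σ = g} ≤ ∏ j, (#{x | g x = j}).factorial := by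
  rcases Finset.eq_empty_or_nonempty ({σ : Equiv.Perm α | f ∘ σ = g} : Finset _) with h | ⟨τ, hτ⟩
  · simp [h]
  obtain rfl : f ∘ τ = g := by simpa only [mem_filter, mem_univ, true_and] using hτ
  have hstab := DomMulAct.stabilizer_card (f ∘ τ)
  simp only [Fintype.card_subtype] at hstab
  rw [← hstab]
  refine card_le_card_of_injOn (τ⁻¹ * ·) (fun σ hσ => ?_) (fun _ _ _ _ h => mul_left_cancel h)
  have hσ : f ∘ σ = f ∘ τ := by simpa using hσ
  suffices ∀ x, f (σ x) = f (τ x) by simpa [funext_iff] using this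
  exact congrFun hσ

theorem exists_mem_typeClass {c : κ → ℕ} (hc : ∑ j, c j = Fintype.card α) :
    ∃ f, f ∈ typeClass α c := by
  obtain ⟨e⟩ : Nonempty (α ≃ Σ j, Fin (c j)) := by
    rw [← Fintype.card_eq]; simp [hc]
  refine ⟨fun x => (e x).1, mem_typeClass.2 fun j => ?_⟩
  rw [← Fintype.card_subtype, ← Fintype.card_fin (c j)]
  exact Fintype.card_congr ((e.subtypeEquiv fun _ => Iff.rfl).trans (Equiv.sigmaSubtype j))

theorem multinomial_le_card_typeClass {c : κ → ℕ} (hc : ∑ j, c j = Fintype.card α) :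
    Nat.multinomial univ c ≤ #(typeClass α c) := by
  obtain ⟨f, hf⟩ := exists_mem_typeClass hc
  have hmaps (σ : Equiv.Perm α) : f ∘ σ ∈ typeClass α c := by
    refine mem_typeClass.2 fun j => ?_
    rw [← mem_typeClass.1 hf j]
    exact card_equiv σ (by simp)
  have hcard := card_le_mul_card_image_of_maps_to (s := (univ : Finset (Equiv.Perm α)))
    (fun σ _ => hmaps σ) (∏ j, (c j).factorial) fun g hg => by
      simpa only [mem_typeClass.1 hg] using card_perm_comp_eq_le f g
  rw [card_univ, Fintype.card_perm, ← hc, ← Nat.multinomial_spec] at hcard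
  exact Nat.le_of_mul_le_mul_left hcard (prod_pos fun j _ => (c j).factorial_pos)

theorem prod_multinomial_le_card_condTypeClass (code : α → ι) {a : ι → κ → ℕ}
    (ha : ∀ i, ∑ j, a i j = #{x | code x = i}) :
    ∏ i, Nat.multinomial univ (a i) ≤ #(condTypeClass code a) := by
  calc ∏ i, Nat.multinomial univ (a i)
      ≤ ∏ i, #(typeClass {x // code x = i} (a i)) :=
        prod_le_prod' fun i _ => multinomial_le_card_typeClass (by rw [ha, Fintype.card_subtype])
    _ = #(Fintype.piFinset fun i => typeClass {x // code x = i} (a i)) :=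
        (Fintype.card_piFinset _).symm
    _ ≤ #(condTypeClass code a) := by
      refine card_le_card_of_injOn (fun g x => g (code x) ⟨x, rfl⟩) (fun g hg => ?_) ?_
      · simp only [mem_coe, Fintype.mem_piFinset, mem_typeClass] at hg
        refine mem_condTypeClass.2 fun i j => ?_
        rw [← hg i j]
        symm
        refine card_bij (fun y _ => y.1) ?_ (fun _ _ _ _ h => Subtype.ext h) ?_
        · rintro ⟨y, rfl⟩ hy
          simpa using hy
        · intro x hx
          obtain ⟨rfl, hfx⟩ := (mem_filter_univ _).1 hx
          exact ⟨⟨x, rfl⟩, by simpa using hfx, rfl⟩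
      · intro g _ g' _ h
        funext i ⟨x, hx⟩
        subst hx
        exact congrFun h x

theorem condTypeClass_subset_typeClass (code : α → ι) (a : ι → κ → ℕ) :
    condTypeClass code a ⊆ typeClass α fun j => ∑ i, a i j := by
  intro f hf
  refine mem_typeClass.2 fun j => ?_
  rw [card_eq_sum_card_fiberwise (f := code) (t := univ) (fun _ _ => mem_coe.2 (mem_univ _))]
  refine sum_congr rfl fun i _ => ?_
  rw [← mem_condTypeClass.1 hf i j, filter_filter]
  simp only [and_comm]

theorem card_typeClass_mul_prod_pow_le (c : κ → ℕ) {w : κ → ℝ} (hw : ∀ j, 0 ≤ w j) :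
    (#(typeClass α c) : ℝ) * ∏ j, w j ^ c j ≤ (∑ j, w j) ^ Fintype.card α := by
  calc (#(typeClass α c) : ℝ) * ∏ j, w j ^ c j
      = ∑ f ∈ typeClass α c, ∏ x, w (f x) := by
        rw [← nsmul_eq_mul, ← sum_const]
        refine sum_congr rfl fun f hf => ?_
        rw [← prod_fiberwise (univ : Finset α) f]
        refine prod_congr rfl fun j _ => ?_
        rw [← mem_typeClass.1 hf j, ← prod_const]
        exact prod_congr rfl fun x hx => by rw [(mem_filter_univ _).1 hx]
    _ ≤ ∑ f : α → κ, ∏ x, w (f x) :=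
        sum_le_sum_of_subset_of_nonneg (subset_univ _)
          fun f _ _ => prod_nonneg fun x _ => hw (f x)
    _ = (∑ j, w j) ^ Fintype.card α := by rw [← Fintype.prod_sum, prod_const, card_univ]

theorem div_pow_mul_card_typeClass_le (code : α → ι) {a : ι → κ → ℕ}
    (ha : ∀ i, ∑ j, a i j = #{x | code x = i}) {w : κ → ℝ} (hw : ∀ j, 0 < w j) {y Z : ℝ}
    (hZ : 0 < Z) (hwZ : ∑ j, w j ≤ Z) (hy : y ≤ ∏ i, typeWeight w (a i)) :
    y / Z ^ Fintype.card α * #(typeClass α fun j => ∑ i, a i j) ≤ #(condTypeClass code a) := by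
  have : 0 < ∏ j, w j ^ ∑ i, a i j := prod_pos fun j _ => pow_pos (hw j) _
  have hweight : ∏ i, typeWeight w (a i) ≤ #(condTypeClass code a) * ∏ j, w j ^ ∑ i, a i j := by
    simp only [typeWeight, prod_mul_distrib, ← prod_pow_eq_pow_sum]
    rw [prod_comm (s := (univ : Finset ι))]
    gcongr
    · exact prod_nonneg fun j _ => prod_nonneg fun _ _ => (pow_pos (hw j) _).le
    · exact_mod_cast prod_multinomial_le_card_condTypeClass code ha
  have hclass : #(typeClass α fun j => ∑ i, a i j) * ∏ j, w j ^ ∑ i, a i j ≤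
      Z ^ Fintype.card α :=
    (card_typeClass_mul_prod_pow_le _ fun j => (hw j).le).trans
      (pow_le_pow_left₀ (sum_nonneg fun j _ => (hw j).le) hwZ _)
  rw [div_mul_eq_mul_div, div_le_iff₀ (by positivity)]
  calc y * #(typeClass α fun j => ∑ i, a i j)
      ≤ (#(condTypeClass code a) * ∏ j, w j ^ ∑ i, a i j) *
          #(typeClass α fun j => ∑ i, a i j) := by gcongr; exact hy.trans hweight
    _ = #(condTypeClass code a) *
          (#(typeClass α fun j => ∑ i, a i j) * ∏ j, w j ^ ∑ i, a i j) := by ring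
    _ ≤ #(condTypeClass code a) * Z ^ Fintype.card α := by gcongr

theorem card_union_piFinset_sdiff_lt {β I : Type*} [DecidableEq β] [Fintype I] {Y : Finset β}
    (hY : Y.Nonempty) {A : I → Finset β} (hA : ∀ i, A i ⊆ Y) {ρ : ℝ}
    (hAρ : ∀ i, ρ * #Y ≤ #(A i)) {t : ℕ} (ht : Real.log (Fintype.card I) < ρ * t) :
    #(univ.biUnion fun i => Fintype.piFinset fun _ : Fin t => Y \ A i) <
      #(Fintype.piFinset fun _ : Fin t => Y) := by
  have hmiss (i : I) : (#(Y \ A i) : ℝ) ≤ Real.exp (-ρ) * #Y := by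
    rw [cast_card_sdiff (hA i)]
    nlinarith [hAρ i, Real.add_one_le_exp (-ρ), (#Y).cast_nonneg (α := ℝ)]
  have hunion : (Fintype.card I : ℝ) * Real.exp (-ρ) ^ t < 1 := by
    rcases Nat.eq_zero_or_pos (Fintype.card I) with h0 | h0
    · simp [h0]
    rw [← Real.exp_log (Nat.cast_pos.2 h0), ← Real.exp_nat_mul, ← Real.exp_add,
      Real.exp_lt_one_iff]
    linarith
  have : (0 : ℝ) < #Y := by exact_mod_cast hY.card_pos
  rw [← Nat.cast_lt (α := ℝ)]
  calc (#(univ.biUnion fun i => Fintype.piFinset fun _ : Fin t => Y \ A i) : ℝ)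
      ≤ ∑ i : I, (#(Fintype.piFinset fun _ : Fin t => Y \ A i) : ℝ) := by
        exact_mod_cast card_biUnion_le
    _ ≤ ∑ _i : I, (Real.exp (-ρ) * #Y) ^ t := by
        refine sum_le_sum fun i _ => ?_
        rw [Fintype.card_piFinset_const, Nat.cast_pow]
        exact pow_le_pow_left₀ (Nat.cast_nonneg _) (hmiss i) t
    _ = Fintype.card I * Real.exp (-ρ) ^ t * (#Y : ℝ) ^ t := by
        rw [sum_const, card_univ, nsmul_eq_mul, mul_pow, mul_assoc]
    _ < 1 * (#Y : ℝ) ^ t := by gcongr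
    _ = #(Fintype.piFinset fun _ : Fin t => Y) := by
        rw [one_mul, Fintype.card_piFinset_const, Nat.cast_pow]

-- A uniformly random sequence of points of `Y` of this length works with positive probability.
theorem exists_hitting_set {β I : Type*} [Fintype I] {Y : Finset β}
    (hY : Y.Nonempty) {A : I → Finset β} (hA : ∀ i, A i ⊆ Y) {ρ : ℝ} (hρ : 0 < ρ)
    (hAρ : ∀ i, ρ * #Y ≤ #(A i)) :
    ∃ Q ⊆ Y, (#Q : ℝ) ≤ Real.log (Fintype.card I) / ρ + 1 ∧ ∀ i, ∃ y ∈ Q, y ∈ A i := by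
  classical
  set t := ⌊Real.log (Fintype.card I) / ρ⌋₊ + 1 with ht
  have hlog : Real.log (Fintype.card I) < ρ * t := by
    rw [mul_comm, ← div_lt_iff₀ hρ, ht, Nat.cast_succ]
    exact Nat.lt_floor_add_one _
  obtain ⟨g, hgY, hg⟩ :=
    exists_mem_notMem_of_card_lt_card (card_union_piFinset_sdiff_lt hY hA hAρ hlog)
  rw [Fintype.mem_piFinset] at hgY
  refine ⟨univ.image g, image_subset_iff.2 fun a _ => hgY a, ?_, fun i => ?_⟩
  · calc (#(univ.image g) : ℝ) ≤ t := by
          simpa using Nat.cast_le (α := ℝ).2 (card_image_le (s := univ) (f := g))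
      _ ≤ Real.log (Fintype.card I) / ρ + 1 := by
          rw [ht, Nat.cast_succ]
          gcongr
          exact Nat.floor_le (div_nonneg (Real.log_natCast_nonneg _) hρ.le)
  · by_contra! hmiss
    refine hg (mem_biUnion.2 ⟨i, mem_univ _, Fintype.mem_piFinset.2 fun a => ?_⟩)
    exact mem_sdiff.2 ⟨hgY a, hmiss _ (mem_image_of_mem g (mem_univ a))⟩

end Counting

section Rate

open Finset

/-- The weight `p ^ (p / (1 - p))` given to the small parts when the big part receives a proportion
at least `p` of every level. -/
noncomputable def smallWeight (p : ℝ) : ℝ := p ^ (p / (1 - p))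

/-- The exponential growth rate of the hitters in which the big part receives a proportion at least
`p` of every level: the weight `1` of the big part plus the total weight of the small parts. -/
noncomputable def hitterRate (p : ℝ) : ℝ := 1 + (1 - p) * smallWeight p

theorem smallWeight_pos {p : ℝ} (hp : 0 < p) : 0 < smallWeight p :=
  Real.rpow_pos_of_pos hp _

theorem smallWeight_le_one {p : ℝ} (hp : 0 < p) (hp1 : p < 1) : smallWeight p ≤ 1 :=
  Real.rpow_le_one hp.le hp1.le (div_nonneg hp.le (sub_nonneg.2 hp1.le))

theorem hitterRate_pos {p : ℝ} (hp : 0 < p) (hp1 : p < 1) : 0 < hitterRate p :=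
  add_pos one_pos (mul_pos (sub_pos.2 hp1) (smallWeight_pos hp))

theorem one_le_hitterRate {p : ℝ} (hp : 0 < p) (hp1 : p < 1) : 1 ≤ hitterRate p :=
  le_add_of_nonneg_right (mul_pos (sub_pos.2 hp1) (smallWeight_pos hp)).le

theorem continuousAt_hitterRate {p : ℝ} (hp : 0 < p) (hp1 : p < 1) :
    ContinuousAt hitterRate p :=
  continuousAt_const.add <| (continuousAt_const.sub continuousAt_id).mul <|
    continuousAt_id.rpow (continuousAt_id.div (continuousAt_const.sub continuousAt_id)
      (sub_pos.2 hp1).ne') (Or.inl hp.ne')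

theorem hitterRate_inv {D : ℝ} (hD : 1 < D) :
    hitterRate D⁻¹ = 1 + (D - 1) / D ^ (D / (D - 1)) := by
  have hD0 : 0 < D := one_pos.trans hD
  have hD1 : D - 1 ≠ 0 := (sub_pos.2 hD).ne'
  have hexp : D⁻¹ / (1 - D⁻¹) = 1 / (D - 1) := by field_simp
  have hsplit : D / (D - 1) = 1 + 1 / (D - 1) := by field_simp; ring
  rw [hitterRate, smallWeight, hexp, hsplit, Real.inv_rpow hD0.le, Real.rpow_add hD0,
    Real.rpow_one]
  have : D ^ (1 / (D - 1)) ≠ 0 := (Real.rpow_pos_of_pos hD0 _).ne'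
  field_simp

theorem mul_log_le_mul_log_smallWeight {p q : ℝ} (hp : 0 < p) (hp1 : p < 1) (hpq : p ≤ q)
    (hq : q ≤ 1) : q * Real.log q ≤ (1 - q) * Real.log (smallWeight p) := by
  have hp' : 0 < 1 - p := sub_pos.2 hp1
  have hconv := Real.convexOn_mul_log.2 hp.le (zero_le_one' ℝ)
    (div_nonneg (sub_nonneg.2 hq) hp'.le) (div_nonneg (sub_nonneg.2 hpq) hp'.le)
    (by field_simp; ring)
  have hcomb : (1 - q) / (1 - p) * p + (q - p) / (1 - p) * 1 = q := by field_simp; ring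
  simp only [smul_eq_mul, hcomb, Real.log_one, mul_zero, add_zero] at hconv
  rw [smallWeight, Real.log_rpow hp]
  exact hconv.trans_eq (by field_simp)

theorem natCast_pow_self_le_pow_mul_smallWeight_pow {p : ℝ} (hp : 0 < p) (hp1 : p < 1) {m s : ℕ}
    (hms : m ≤ s) (hpm : p * s ≤ m) : (m : ℝ) ^ m ≤ s ^ m * smallWeight p ^ (s - m) := by
  rcases Nat.eq_zero_or_pos m with rfl | hm
  · rcases Nat.eq_zero_or_pos s with rfl | hs
    · simp
    · have : (0 : ℝ) < s := Nat.cast_pos.2 hs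
      have : 0 < p * s := mul_pos hp this
      simp only [Nat.cast_zero] at hpm
      linarith
  have hm0 : (0 : ℝ) < m := Nat.cast_pos.2 hm
  have hs0 : (0 : ℝ) < s := hm0.trans_le (Nat.cast_le.2 hms)
  have hchord := mul_log_le_mul_log_smallWeight hp hp1 ((le_div_iff₀ hs0).2 hpm)
    ((div_le_one hs0).2 (Nat.cast_le.2 hms))
  have hweight := smallWeight_pos hp
  rw [← Real.log_le_log_iff (by positivity) (by positivity),
    Real.log_mul (by positivity) (by positivity), Real.log_pow, Real.log_pow, Real.log_pow,
    Nat.cast_sub hms]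
  rw [Real.log_div hm0.ne' hs0.ne'] at hchord
  have := mul_le_mul_of_nonneg_left hchord hs0.le
  field_simp at this
  linarith

/-- The weight on parts (`none` is the big part) which makes the levels split in proportion to `v`
contribute at least subexponentially to the count of labelings. -/
noncomputable def partWeight {κ : Type*} (p : ℝ) (v : κ → ℝ) : Option κ → ℝ
  | none => 1
  | some j => smallWeight p * v j

theorem partWeight_pos {κ : Type*} {p : ℝ} (hp : 0 < p) {v : κ → ℝ} (hv : ∀ j, 0 < v j) :
    ∀ j, 0 < partWeight p v j
  | none => one_pos
  | some j => mul_pos (smallWeight_pos hp) (hv j)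

theorem sum_partWeight_le {κ : Type*} [Fintype κ] {p : ℝ} (hp : 0 < p) {v : κ → ℝ}
    (hv : ∑ j, v j ≤ 1 - p) : ∑ j, partWeight p v j ≤ hitterRate p := by
  rw [Fintype.sum_option, hitterRate, mul_comm (1 - p)]
  simp only [partWeight, ← mul_sum]
  gcongr
  exact (smallWeight_pos hp).le

theorem prod_pow_self_le_pow_mul_prod_partWeight_pow {κ : Type*} [Fintype κ] {p : ℝ} (hp : 0 < p)
    (hp1 : p < 1) {v : κ → ℝ} {a : Option κ → ℕ} {s : ℕ} (hs : ∑ j, a j = s)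
    (hbig : p * s ≤ a none) (hsmall : ∀ j, (a (some j) : ℝ) ≤ v j * s) :
    ∏ j, (a j : ℝ) ^ a j ≤ s ^ s * ∏ j, partWeight p v j ^ a j := by
  rw [Fintype.sum_option] at hs
  have hsub : s - a none = ∑ j, a (some j) := by omega
  have hlam := smallWeight_pos hp
  rw [Fintype.prod_option, Fintype.prod_option]
  simp only [partWeight, one_pow, one_mul, mul_pow, prod_mul_distrib, prod_pow_eq_pow_sum]
  calc (a none : ℝ) ^ a none * ∏ j, (a (some j) : ℝ) ^ a (some j)
      ≤ (s ^ a none * smallWeight p ^ (s - a none)) * ∏ j, (v j * s) ^ a (some j) := by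
        gcongr with j
        · exact natCast_pow_self_le_pow_mul_smallWeight_pow hp hp1 (by omega) hbig
        · exact hsmall j
    _ = s ^ (a none + ∑ j, a (some j)) *
          (smallWeight p ^ (∑ j, a (some j)) * ∏ j, v j ^ a (some j)) := by
        simp only [mul_pow, prod_mul_distrib, prod_pow_eq_pow_sum, hsub, pow_add]
        ring
    _ = _ := by rw [hs]

theorem one_le_mul_typeWeight_partWeight {κ : Type*} [Fintype κ] {p : ℝ} (hp : 0 < p)
    (hp1 : p < 1) {v : κ → ℝ} {a : Option κ → ℕ} {s : ℕ} (hs : ∑ j, a j = s)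
    (hbig : p * s ≤ a none) (hsmall : ∀ j, (a (some j) : ℝ) ≤ v j * s) :
    1 ≤ ((s : ℝ) + 1) ^ Fintype.card (Option κ) * typeWeight (partWeight p v) a := by
  have hmode := sum_pow_sum_le_multinomial_mul_prod_pow_self a
  rw [hs] at hmode
  have hss : (0 : ℝ) < (s : ℝ) ^ s := by exact_mod_cast Nat.pow_self_pos
  refine le_of_mul_le_mul_left ?_ hss
  calc (s : ℝ) ^ s * 1 ≤ ((s : ℝ) + 1) ^ Fintype.card (Option κ) *
          (Nat.multinomial univ a * ∏ j, (a j : ℝ) ^ a j) := by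
        rw [mul_one]; exact_mod_cast hmode
    _ ≤ ((s : ℝ) + 1) ^ Fintype.card (Option κ) *
          (Nat.multinomial univ a * (s ^ s * ∏ j, partWeight p v j ^ a j)) := by
        gcongr
        exact prod_pow_self_le_pow_mul_prod_partWeight_pow hp hp1 hs hbig hsmall
    _ = _ := by rw [typeWeight]; ring

end Rate

section Allocation

open Finset

theorem exists_le_sum_eq_of_le_sum {κ : Type*} [Fintype κ] (R : κ → ℕ) {s : ℕ}
    (h : s ≤ ∑ j, R j) : ∃ a ≤ R, ∑ j, a j = s := by
  classical
  induction s with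
  | zero => exact ⟨0, fun _ => Nat.zero_le _, by simp⟩
  | succ s ih =>
    obtain ⟨a, ha, hsum⟩ := ih (by omega)
    obtain ⟨j, -, hj⟩ := exists_lt_of_sum_lt (s := univ) (f := a) (g := R) (by omega)
    refine ⟨a + Pi.single j 1, fun k => ?_, by simp [sum_add_distrib, hsum]⟩
    rcases eq_or_ne k j with rfl | hk
    · simpa using hj
    · simpa [hk] using ha k

-- Fill the parts of `κ` with the heaviest elements; `R j / d ^ m` is what part `j` still lacks.
theorem exists_greedy_allocation {κ : Type*} [Fintype κ] {d : ℕ} (hd : 0 < d) (s : ℕ → ℕ) (m : ℕ) :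
    ∃ (b : ℕ → κ → ℕ) (R : κ → ℕ), (∀ i, ∑ j, b i j ≤ s i) ∧
      (∀ j, ∑ i ∈ range m, (b i j : ℝ) / d ^ i + R j / d ^ m = 1) ∧
      ((∀ i < m, ∑ j, b i j = s i) ∨ R = 0) := by
  induction m with
  | zero => exact ⟨0, 1, by simp⟩
  | succ m ih =>
    obtain ⟨b, R, hbs, hbR, hfull⟩ := ih
    obtain ⟨a, haR, hsum⟩ := exists_le_sum_eq_of_le_sum R (min_le_right (s m) (∑ j, R j))
    refine ⟨Function.update b m a, fun j => d * (R j - a j), fun i => ?_, fun j => ?_, ?_⟩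
    · rcases eq_or_ne i m with rfl | hi
      · simp [hsum]
      · simpa [hi] using hbs i
    · have hearly : ∑ i ∈ range m, (Function.update b m a i j : ℝ) / d ^ i =
          ∑ i ∈ range m, (b i j : ℝ) / d ^ i :=
        sum_congr rfl fun i hi => by rw [Function.update_of_ne (mem_range.1 hi).ne]
      rw [sum_range_succ, hearly, Function.update_self, ← hbR j]
      push_cast [Nat.cast_sub (haR j)]
      field_simp
      ring
    · rcases le_total (s m) (∑ j, R j) with hle | hle
      · refine hfull.imp (fun h i hi => ?_) fun h => ?_
        · rcases (Nat.lt_succ_iff_lt_or_eq.1 hi) with hi | rfl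
          · simpa [hi.ne] using h i hi
          · simp [hsum, hle]
        · funext j; simp [h]
      · right
        rw [min_eq_right hle] at hsum
        have haR' := (sum_eq_sum_iff_of_le fun j _ => haR j).1 hsum
        funext j
        simp [haR' j (mem_univ j)]

-- Rounding down costs `R - b` at most `1`, so the ratio of `R` to `U` grows by at most `d / c`.
theorem exists_rounding_step {d R s : ℕ} {U U' c q : ℝ} (hc : 0 < c) (hU : 0 < U) (hsU : s ≤ U)
    (hU' : U' = d * (U - s)) (hcU : U' = 0 ∨ c ≤ U') (hd : 0 < d) (hR : R ≤ q * U) :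
    ∃ b ≤ R, (b : ℝ) ≤ q * s ∧ ((d * (R - b) : ℕ) : ℝ) ≤ (q + d / c) * U' := by
  have hd0 : (0 : ℝ) < d := Nat.cast_pos.2 hd
  have hfloor : (⌊(R * s / U : ℝ)⌋₊ : ℝ) ≤ R * s / U := Nat.floor_le (by positivity)
  have hbR : ⌊(R * s / U : ℝ)⌋₊ ≤ R := Nat.floor_le_of_le (div_le_of_le_mul₀ hU.le
    (Nat.cast_nonneg _) (mul_le_mul_of_nonneg_left hsU (Nat.cast_nonneg _)))
  refine ⟨⌊(R * s / U : ℝ)⌋₊, hbR, hfloor.trans ?_, ?_⟩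
  · rw [div_le_iff₀ hU]
    nlinarith [s.cast_nonneg (α := ℝ)]
  push_cast [Nat.cast_sub hbR]
  rcases hcU with h0 | hcU
  · have hUs : U = s := by
      rw [h0, zero_eq_mul] at hU'
      exact sub_eq_zero.1 (hU'.resolve_left hd0.ne')
    rw [hUs, mul_div_cancel_right₀ _ (hUs ▸ hU.ne'), Nat.floor_natCast, h0]
    simp
  · have hround : (R : ℝ) - ⌊(R * s / U : ℝ)⌋₊ ≤ R * (U - s) / U + 1 := by
      have hlt := Nat.lt_floor_add_one (R * s / U : ℝ)
      have : (R : ℝ) * (U - s) / U = R - R * s / U := by field_simp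
      linarith
    calc (d : ℝ) * (R - ⌊(R * s / U : ℝ)⌋₊) ≤ d * (R * (U - s) / U + 1) := by gcongr
      _ ≤ d * (q * (U - s) + 1) := by
          gcongr
          rw [div_le_iff₀ hU]
          nlinarith
      _ = q * U' + d / c * c := by rw [hU', div_mul_cancel₀ _ hc.ne']; ring
      _ ≤ (q + d / c) * U' := by rw [add_mul]; gcongr

theorem exists_proportional_rounding {d : ℕ} (hd : 0 < d) {c v : ℝ} (hc : 0 < c) (hv : 0 ≤ v)
    (L : ℕ) : ∀ {s : ℕ → ℕ} {U : ℕ → ℝ} {R : ℕ}, (∀ i < L, U (i + 1) = d * (U i - s i)) →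
      U L = 0 → (∀ i < L, c ≤ U i) → R ≤ (v - L * (d / c)) * U 0 →
      ∃ b : ℕ → ℕ, (∀ i, (b i : ℝ) ≤ v * s i) ∧
        ∀ r, L ≤ r → ∑ i ∈ range r, (b i : ℝ) / d ^ i = R := by
  have hd0 : (0 : ℝ) < d := Nat.cast_pos.2 hd
  induction L with
  | zero =>
    intro s U R _ hU0 _ hR
    obtain rfl : R = 0 := by
      rw [hU0, mul_zero] at hR
      exact_mod_cast hR.antisymm R.cast_nonneg
    exact ⟨0, fun i => by simpa using mul_nonneg hv (s i).cast_nonneg, by simp⟩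
  | succ L ih =>
    intro s U R hrec hUL hcU hR
    have hnext : U 1 = 0 ∨ c ≤ U 1 := by
      rcases Nat.eq_zero_or_pos L with rfl | hL
      · exact Or.inl hUL
      · exact Or.inr (hcU 1 (by omega))
    have hsU : (s 0 : ℝ) ≤ U 0 := by
      have : 0 ≤ d * (U 0 - s 0) := by
        rw [← hrec 0 L.succ_pos]
        exact hnext.elim ge_of_eq hc.le.trans
      linarith [nonneg_of_mul_nonneg_right this hd0]
    obtain ⟨b₀, hb₀R, hb₀v, hR'⟩ := exists_rounding_step hc (hc.trans_le (hcU 0 L.succ_pos)) hsU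
      (hrec 0 L.succ_pos) hnext hd hR
    obtain ⟨b, hbv, hb⟩ := ih (s := fun i => s (i + 1)) (U := fun i => U (i + 1))
      (R := d * (R - b₀)) (fun i hi => hrec (i + 1) (by omega)) hUL
      (fun i hi => hcU (i + 1) (by omega)) (hR'.trans_eq (by push_cast; ring))
    refine ⟨fun | 0 => b₀ | i + 1 => b i, ?_, fun r hr => ?_⟩
    · rintro (_ | i)
      · refine hb₀v.trans (mul_le_mul_of_nonneg_right ?_ (Nat.cast_nonneg _))
        exact sub_le_self v (by positivity)
      · exact hbv i
    · obtain ⟨r, rfl⟩ := Nat.exists_eq_succ_of_ne_zero (by omega : r ≠ 0)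
      rw [sum_range_succ']
      simp only [pow_succ, ← div_div, ← sum_div, hb r (by omega)]
      push_cast [Nat.cast_sub hb₀R]
      field_simp
      ring

theorem exists_first_lt_and_mul_le {D K n : ℝ} (hD : 2 ≤ D) {s T : ℕ → ℝ}
    (hT : ∀ i, T (i + 1) = D * (T i - s i)) (hs : ∀ k, ∑ i ∈ range k, s i ≤ n)
    (hK : 0 < K) (hK0 : K ≤ T 0) (hTK : ∃ k, T k < K) :
    ∃ L, (∀ i < L, K ≤ T i) ∧ T L < K ∧ L * K ≤ 2 * n := by
  classical
  have hbefore (i : ℕ) (hi : i < Nat.find hTK) : K ≤ T i := not_lt.1 (Nat.find_min hTK hi)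
  refine ⟨Nat.find hTK, hbefore, Nat.find_spec hTK, ?_⟩
  have hlevel (i : ℕ) : s i = (1 - 1 / D) * T i + (T i - T (i + 1)) / D := by
    rw [hT]; field_simp; ring
  have hhalf : 1 / 2 ≤ 1 - 1 / D := by
    linarith [one_div_le_one_div_of_le two_pos hD]
  have hsum : ∑ i ∈ range (Nat.find hTK), s i =
      (1 - 1 / D) * ∑ i ∈ range (Nat.find hTK), T i + (T 0 - T (Nat.find hTK)) / D := by
    simp only [hlevel, sum_add_distrib, ← mul_sum, ← sum_div, sum_range_sub']
  have hTsum : Nat.find hTK * K ≤ ∑ i ∈ range (Nat.find hTK), T i := by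
    simpa using card_nsmul_le_sum (range (Nat.find hTK)) T K fun i hi => hbefore i (mem_range.1 hi)
  have hdrop : 0 ≤ (T 0 - T (Nat.find hTK)) / D :=
    div_nonneg (by linarith [Nat.find_spec hTK]) (by linarith)
  have hLK : 0 ≤ Nat.find hTK * K := by positivity
  nlinarith [hs (Nat.find hTK)]

-- Subtracting the mass beyond the first level with `T L < K` makes the remaining mass vanish there.
theorem exists_truncation {D K n : ℝ} (hD : 2 ≤ D) {s T : ℕ → ℝ}
    (hT : ∀ i, T (i + 1) = D * (T i - s i)) (hs : ∀ k, ∑ i ∈ range k, s i ≤ n)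
    (hT_nonneg : ∀ i, 0 ≤ T i) (hK : 0 < K) (hK0 : K ≤ T 0) (hTK : ∃ k, T k < K) :
    ∃ (L : ℕ) (U : ℕ → ℝ), (∀ i, U (i + 1) = D * (U i - s i)) ∧ U L = 0 ∧
      (∀ i < L, K / 2 ≤ U i) ∧ T 0 - K ≤ U 0 ∧ L * K ≤ 2 * n := by
  obtain ⟨L, hbefore, hTL, hLK⟩ := exists_first_lt_and_mul_le hD hT hs hK hK0 hTK
  have : 0 < D := two_pos.trans_le hD
  refine ⟨L, fun i => T i - T L / D ^ L * D ^ i, fun i => ?_, ?_, fun i hi => ?_, ?_, hLK⟩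
  · simp only [hT]
    ring
  · field_simp
    ring
  · have htail : T L / D ^ L * D ^ i ≤ K / 2 := by
      have hpow : D ^ i * 2 ≤ D ^ L := calc
        D ^ i * 2 ≤ D ^ (i + 1) := by rw [pow_succ]; gcongr
        _ ≤ D ^ L := pow_le_pow_right₀ (by linarith) hi
      rw [div_mul_eq_mul_div, div_le_div_iff₀ (by positivity) two_pos, mul_assoc]
      exact mul_le_mul hTL.le hpow (by positivity) hK.le
    linarith [hbefore i hi]
  · have hhead : T L / D ^ L ≤ T L := div_le_self (hT_nonneg L) (one_le_pow₀ (by linarith))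
    simp only [pow_zero, mul_one]
    linarith

theorem div_le_of_le_sub_one_mul {D η M X : ℝ} (hD : 2 ≤ D) (hη : 0 < η) (hηD : η < 1 / D)
    (hM : 0 < M) (hX0 : 0 ≤ X) (hX : X ≤ (D - 1) * M) :
    X / (M + X - η * M) ≤ 1 - 1 / D + η / 2 := by
  have hη1 : η < 1 := hηD.trans_le (div_le_one_of_le₀ (by linarith) (by linarith))
  rw [div_le_iff₀ (by nlinarith), ← sub_nonneg]
  have hidentity : (1 - 1 / D + η / 2) * (M + X - η * M) - X =
      ((D - 1) * M - X) * (1 / D - η / 2) + η * M * (D / 2 - 1 + (1 / D - η / 2)) := by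
    field_simp
    ring
  rw [hidentity]
  exact add_nonneg (mul_nonneg (by linarith) (by linarith))
    (mul_nonneg (by positivity) (by linarith))

theorem exists_proportional_allocation {κ : Type*} [Fintype κ] {d n r : ℕ} (hd : 2 ≤ d)
    (hκ : Fintype.card κ + 1 = d) {η M : ℝ} (hη : 0 < η) (hηd : η < 1 / d) (hM : 0 < M)
    (hn : 2 * n ≤ r * (η * M)) (hr : 4 * d ^ 2 * r ≤ η ^ 2 * M) {s : ℕ → ℕ} {T : ℕ → ℝ}
    {R : κ → ℕ} (hT : ∀ i, T (i + 1) = d * (T i - s i)) (hT_nonneg : ∀ i, 0 ≤ T i)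
    (hT_zero : ∃ i, T i = 0) (hs : ∀ k, ∑ i ∈ range k, s i ≤ n) (hT0 : T 0 = M + ∑ j, (R j : ℝ))
    (hR : ∀ j, R j ≤ M) :
    ∃ v : κ → ℝ, (∀ j, η / (2 * d) ≤ v j) ∧ ∑ j, v j ≤ 1 - (1 / d - η) ∧
      ∃ b : ℕ → κ → ℕ, (∀ i j, (b i j : ℝ) ≤ v j * s i) ∧
        ∀ j, ∑ i ∈ range r, (b i j : ℝ) / d ^ i = R j := by
  have hd2 : (2 : ℝ) ≤ d := by exact_mod_cast hd
  have hκ' : (Fintype.card κ : ℝ) = d - 1 := by rw [← hκ]; push_cast; ring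
  have hη1 : η < 1 := hηd.trans_le (div_le_one_of_le₀ (by linarith) (by linarith))
  have hK : 0 < η * M := mul_pos hη hM
  have hX0 : (0 : ℝ) ≤ ∑ j, (R j : ℝ) := sum_nonneg fun j _ => Nat.cast_nonneg _
  have hX : ∑ j, (R j : ℝ) ≤ (d - 1) * M := by
    simpa [hκ'] using sum_le_card_nsmul univ (fun j => (R j : ℝ)) M fun j _ => hR j
  obtain ⟨L, U, hU, hUL, hUc, hU0, hLK⟩ := exists_truncation (n := n) hd2 hT
    (fun k => by exact_mod_cast hs k) hT_nonneg hK (by nlinarith)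
    (hT_zero.imp fun i hi => hi.trans_lt hK)
  rw [hT0] at hU0
  have hLr : (L : ℝ) ≤ r := le_of_mul_le_mul_right (hLK.trans hn) hK
  have hden : 0 < M + ∑ j, (R j : ℝ) - η * M := by nlinarith
  have hU0_pos : 0 < U 0 := hden.trans_le hU0
  have hround : L * (d / (η * M / 2)) ≤ η / (2 * d) := by
    rw [mul_div_assoc', div_le_div_iff₀ (by positivity) (by positivity)]
    nlinarith
  have hlength (j : κ) :
      (R j : ℝ) ≤ (R j / U 0 + η / (2 * d) - L * (d / (η * M / 2))) * U 0 := by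
    rw [add_sub_assoc, add_mul, div_mul_cancel₀ _ hU0_pos.ne']
    exact le_add_of_nonneg_right (mul_nonneg (sub_nonneg.2 hround) hU0_pos.le)
  choose b hbv hb using fun j => exists_proportional_rounding (by omega) (half_pos hK)
    (by positivity) L (fun i _ => hU i) hUL hUc (hlength j)
  refine ⟨fun j => R j / U 0 + η / (2 * d), fun j => le_add_of_nonneg_left (by positivity), ?_,
    fun i j => b j i, fun i j => hbv j i, fun j => hb j r (Nat.cast_le.1 hLr)⟩
  rw [sum_add_distrib, ← sum_div, sum_const, card_univ, nsmul_eq_mul, hκ']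
  calc (∑ j, (R j : ℝ)) / U 0 + ((d : ℝ) - 1) * (η / (2 * d))
      ≤ (∑ j, (R j : ℝ)) / (M + ∑ j, (R j : ℝ) - η * M) + η / 2 := by
        gcongr
        rw [mul_div_assoc', div_le_div_iff₀ (by positivity) two_pos]
        nlinarith
    _ ≤ 1 - (1 / d - η) := by linarith [div_le_of_le_sub_one_mul hd2 hη hηd hM hX0 hX]

/-- The mass of the levels from `k` on in units of `D⁻ᵏ`, for levels whose masses `s i / Dⁱ` have
sum `R`. -/
noncomputable def remainingMass (D R : ℝ) (s : ℕ → ℕ) (k : ℕ) : ℝ :=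
  D ^ k * (R - ∑ i ∈ range k, s i / D ^ i)

theorem remainingMass_succ {D : ℝ} (hD : D ≠ 0) (R : ℝ) (s : ℕ → ℕ) (k : ℕ) :
    remainingMass D R s (k + 1) = D * (remainingMass D R s k - s k) := by
  simp only [remainingMass, sum_range_succ]
  field_simp
  ring

theorem remainingMass_nonneg {D R : ℝ} (hD : 0 ≤ D) {s : ℕ → ℕ}
    (hs : HasSum (fun i => s i / D ^ i) R) (k : ℕ) : 0 ≤ remainingMass D R s k :=
  mul_nonneg (by positivity)
    (sub_nonneg.2 (sum_le_hasSum _ (fun i _ => by positivity) hs))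

theorem remainingMass_of_greedy {κ : Type*} [Fintype κ] {d m : ℕ} (hκ : Fintype.card κ + 1 = d)
    (hd : 0 < d) {s : ℕ → ℕ} {b : ℕ → κ → ℕ} {R : κ → ℕ} (hb : ∀ i < m, ∑ j, b i j = s i)
    (hR : ∀ j, ∑ i ∈ range m, (b i j : ℝ) / d ^ i + R j / d ^ m = 1) :
    remainingMass d d s m = d ^ m + ∑ j, (R j : ℝ) := by
  have hlevels : ∑ i ∈ range m, (s i : ℝ) / d ^ i = ∑ j, (1 - (R j : ℝ) / d ^ m) := by
    rw [sum_congr rfl fun j _ => (eq_sub_of_add_eq (hR j)).symm, sum_comm]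
    refine sum_congr rfl fun i hi => ?_
    rw [← hb i (mem_range.1 hi), ← sum_div, Nat.cast_sum]
  have hκ' : (Fintype.card κ : ℝ) = d - 1 := by rw [← hκ]; push_cast; ring
  rw [remainingMass, hlevels, sum_sub_distrib, ← sum_div, sum_const, card_univ, nsmul_eq_mul, hκ']
  field_simp
  ring

theorem exists_window_allocation {κ : Type*} [Fintype κ] {d n m r : ℕ} (hd : 2 ≤ d)
    (hκ : Fintype.card κ + 1 = d) {η : ℝ} (hη : 0 < η) (hηd : η < 1 / d)
    (hn : 2 * n ≤ r * (η * d ^ m)) (hr : 4 * d ^ 2 * r ≤ η ^ 2 * d ^ m) {s : ℕ → ℕ}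
    (hmass : HasSum (fun i => (s i : ℝ) / d ^ i) d) (hfin : ∃ N, ∀ k ≥ N, s k = 0)
    (hsn : ∀ t : Finset ℕ, ∑ i ∈ t, s i ≤ n) {b : ℕ → κ → ℕ} {R : κ → ℕ}
    (hb : ∀ i < m, ∑ j, b i j = s i)
    (hR : ∀ j, ∑ i ∈ range m, (b i j : ℝ) / d ^ i + R j / d ^ m = 1) :
    ∃ v : κ → ℝ, (∀ j, η / (2 * d) ≤ v j) ∧ ∑ j, v j ≤ 1 - (1 / d - η) ∧
      ∃ b' : ℕ → κ → ℕ, (∀ i j, (b' i j : ℝ) ≤ v j * s (m + i)) ∧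
        ∀ j, ∑ i ∈ range r, (b' i j : ℝ) / d ^ i = R j := by
  have hd0 : (0 : ℝ) < d := Nat.cast_pos.2 (by omega)
  refine exists_proportional_allocation hd hκ hη hηd (pow_pos hd0 m) hn hr
    (T := fun i => remainingMass d d s (m + i))
    (fun i => remainingMass_succ hd0.ne' d s (m + i))
    (fun i => remainingMass_nonneg hd0.le hmass (m + i)) ?_ (fun k => ?_)
    (remainingMass_of_greedy hκ (by omega) hb hR) fun j => ?_
  · obtain ⟨N, hN⟩ := hfin
    have htotal := hmass.unique (hasSum_sum_of_ne_finset_zero (s := range (m + N)) fun i hi => by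
      simp [hN i (by rw [mem_range] at hi; omega)])
    exact ⟨N, by rw [remainingMass, ← htotal, sub_self, mul_zero]⟩
  · simpa using hsn ((range k).map (addLeftEmbedding m))
  · have hnonneg : 0 ≤ ∑ i ∈ range m, (b i j : ℝ) / d ^ i := sum_nonneg fun i _ => by positivity
    rw [← div_le_one (pow_pos hd0 m)]
    linarith [hR j]

theorem exists_allocation {κ : Type*} [Fintype κ] {d n m r : ℕ} (hd : 2 ≤ d)
    (hκ : Fintype.card κ + 1 = d) {η : ℝ} (hη : 0 < η) (hηd : η < 1 / d)
    (hn : 2 * n ≤ r * (η * d ^ m)) (hr : 4 * d ^ 2 * r ≤ η ^ 2 * d ^ m) {s : ℕ → ℕ}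
    (hmass : HasSum (fun i => (s i : ℝ) / d ^ i) d) (hfin : ∃ N, ∀ k ≥ N, s k = 0)
    (hsn : ∀ t : Finset ℕ, ∑ i ∈ t, s i ≤ n) :
    ∃ v : κ → ℝ, (∀ j, η / (2 * d) ≤ v j) ∧ ∑ j, v j ≤ 1 - (1 / d - η) ∧
      ∃ b : ℕ → κ → ℕ, (∀ i, ∑ j, b i j ≤ s i) ∧
        (∀ i j, (b (m + i) j : ℝ) ≤ v j * s (m + i)) ∧
        ∀ j, ∑ i ∈ range (m + r), (b i j : ℝ) / d ^ i = 1 := by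
  have hd0 : (0 : ℝ) < d := Nat.cast_pos.2 (by omega)
  obtain ⟨b, R, hbs, hR, hfull⟩ := exists_greedy_allocation (κ := κ) (by omega : 0 < d) s m
  obtain ⟨v, hv, hv1, b', hb'v, hb'R⟩ : ∃ v : κ → ℝ, (∀ j, η / (2 * d) ≤ v j) ∧
      ∑ j, v j ≤ 1 - (1 / d - η) ∧ ∃ b' : ℕ → κ → ℕ, (∀ i j, (b' i j : ℝ) ≤ v j * s (m + i)) ∧
        ∀ j, ∑ i ∈ range r, (b' i j : ℝ) / d ^ i = R j := by
    rcases hfull with hb | rfl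
    · exact exists_window_allocation hd hκ hη hηd hn hr hmass hfin hsn hb hR
    · refine ⟨fun _ => η / (2 * d), fun _ => le_rfl, ?_, 0, fun i j => ?_, by simp⟩
      · have hκd : (Fintype.card κ : ℝ) ≤ d := by exact_mod_cast (by omega : Fintype.card κ ≤ d)
        have hd1 : 1 / (d : ℝ) ≤ 1 := (div_le_one hd0).2 (by exact_mod_cast (by omega : 1 ≤ d))
        calc ∑ _j : κ, η / (2 * d) = Fintype.card κ * (η / (2 * d)) := by simp
          _ ≤ d * (η / (2 * d)) := by gcongr
          _ = η / 2 := by field_simp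
          _ ≤ 1 - (1 / d - η) := by linarith
      · simp only [Pi.zero_apply, Nat.cast_zero]; positivity
  refine ⟨v, hv, hv1, fun i j => if i < m then b i j else b' (i - m) j, fun i => ?_, ?_,
    fun j => ?_⟩
  · rcases lt_or_ge i m with hi | hi
    · simpa [hi] using hbs i
    · simp only [hi.not_gt, if_false]
      have hsum : ∑ j, (b' (i - m) j : ℝ) ≤ s i := by
        refine (sum_le_sum fun j _ => hb'v (i - m) j).trans ?_
        rw [← sum_mul, Nat.add_sub_cancel' hi]
        exact mul_le_of_le_one_left (Nat.cast_nonneg _) (by linarith)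
      exact_mod_cast hsum
  · simpa using hb'v
  · rw [sum_range_add, ← hR j, ← hb'R j, sum_div]
    congr 1
    · exact sum_congr rfl fun i hi => by simp only [if_pos (mem_range.1 hi)]
    · simp [pow_add, div_div, mul_comm]

/-- The distribution of the `s` elements of a level among the parts, when the parts of `κ` receive
`b` and the big part `none` receives the rest. -/
def splitLevel {κ : Type*} [Fintype κ] (s : ℕ) (b : κ → ℕ) : Option κ → ℕ
  | none => s - ∑ j, b j
  | some j => b j

variable {κ : Type*} [Fintype κ]

theorem sum_splitLevel {s : ℕ} {b : κ → ℕ} (h : ∑ j, b j ≤ s) : ∑ j, splitLevel s b j = s := by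
  simpa only [Fintype.sum_option, splitLevel] using Nat.sub_add_cancel h

theorem pow_sum_le_typeWeight_splitLevel {p x : ℝ} {v : κ → ℝ} (hx : 0 ≤ x)
    (hxv : ∀ j, x ≤ smallWeight p * v j) (s : ℕ) (b : κ → ℕ) :
    x ^ ∑ j, b j ≤ typeWeight (partWeight p v) (splitLevel s b) := by
  have hweight : x ^ ∑ j, b j ≤ ∏ j, partWeight p v j ^ splitLevel s b j := by
    rw [Fintype.prod_option]
    simp only [partWeight, splitLevel, one_pow, one_mul]
    rw [← prod_pow_eq_pow_sum]
    exact prod_le_prod (fun j _ => pow_nonneg hx _) fun j _ => pow_le_pow_left₀ hx (hxv j) _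
  refine hweight.trans (le_mul_of_one_le_left ((pow_nonneg hx _).trans hweight) ?_)
  exact_mod_cast Nat.multinomial_pos univ (splitLevel s b)

theorem inv_le_typeWeight_splitLevel {p : ℝ} (hp : 0 < p) (hp1 : p < 1) {n s : ℕ} (hsn : s ≤ n)
    {v : κ → ℝ} (hv : ∀ j, 0 < v j) (hv1 : ∑ j, v j ≤ 1 - p) {b : κ → ℕ} (hb : ∑ j, b j ≤ s)
    (hbv : ∀ j, b j ≤ v j * s) :
    (((n : ℝ) + 1) ^ Fintype.card (Option κ))⁻¹ ≤
      typeWeight (partWeight p v) (splitLevel s b) := by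
  have hbig : p * s ≤ splitLevel s b none := by
    have hsum : ∑ j, (b j : ℝ) ≤ (1 - p) * s :=
      (sum_le_sum fun j _ => hbv j).trans (by rw [← sum_mul]; gcongr)
    rw [splitLevel, Nat.cast_sub hb]
    push_cast
    linarith
  have hweight := one_le_mul_typeWeight_partWeight hp hp1 (sum_splitLevel hb) hbig hbv
  rw [inv_le_iff_one_le_mul₀' (by positivity)]
  refine hweight.trans (mul_le_mul_of_nonneg_right ?_ ?_)
  · gcongr
  · exact typeWeight_nonneg (fun j => (partWeight_pos hp hv j).le) _

theorem sum_le_pow_of_sum_div_pow_le_one {D : ℝ} (hD : 1 ≤ D) {m : ℕ} {b : ℕ → ℝ}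
    (hb : ∀ i, 0 ≤ b i) (h : ∑ i ∈ range m, b i / D ^ i ≤ 1) : ∑ i ∈ range m, b i ≤ D ^ m := by
  have hDm : 0 < D ^ m := by positivity
  rw [← div_le_one hDm, sum_div]
  refine (sum_le_sum fun i hi => ?_).trans h
  have := hb i
  gcongr
  exact (mem_range.1 hi).le

theorem pow_mul_inv_pow_le_prod_typeWeight {d m n r : ℕ} (hd : 0 < d)
    (hκ : Fintype.card κ ≤ d) {p x : ℝ} (hp : 0 < p) (hp1 : p < 1) (hx : 0 ≤ x) (hx1 : x ≤ 1)
    {v : κ → ℝ} (hv : ∀ j, 0 < v j) (hv1 : ∑ j, v j ≤ 1 - p) (hxv : ∀ j, x ≤ smallWeight p * v j)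
    {s : ℕ → ℕ} (hsn : ∀ i, s i ≤ n) {b : ℕ → κ → ℕ} (hb : ∀ i, ∑ j, b i j ≤ s i)
    (hbv : ∀ i j, b (m + i) j ≤ v j * s (m + i))
    (hmass : ∀ j, ∑ i ∈ range (m + r), (b i j : ℝ) / d ^ i = 1) :
    x ^ (d * d ^ m) * (((n : ℝ) + 1) ^ Fintype.card (Option κ))⁻¹ ^ r ≤
      ∏ i ∈ range (m + r), typeWeight (partWeight p v) (splitLevel (s i) (b i)) := by
  have hcount (j : κ) : ∑ i ∈ range m, b i j ≤ d ^ m := by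
    have hearly : ∑ i ∈ range m, (b i j : ℝ) / d ^ i ≤ 1 := by
      rw [← hmass j]
      exact sum_le_sum_of_subset_of_nonneg (range_mono (Nat.le_add_right m r))
        fun i _ _ => by positivity
    exact_mod_cast sum_le_pow_of_sum_div_pow_le_one (by exact_mod_cast hd)
      (fun i => (b i j).cast_nonneg) hearly
  rw [prod_range_add]
  gcongr
  · exact prod_nonneg fun i _ => typeWeight_nonneg (fun j => (partWeight_pos hp hv j).le) _
  · calc x ^ (d * d ^ m) ≤ x ^ ∑ i ∈ range m, ∑ j, b i j := by
          refine pow_le_pow_of_le_one hx hx1 ?_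
          rw [sum_comm]
          refine (sum_le_card_nsmul univ _ _ fun j _ => hcount j).trans ?_
          rw [card_univ, smul_eq_mul]
          gcongr
      _ = ∏ i ∈ range m, x ^ ∑ j, b i j := (prod_pow_eq_pow_sum _ _ _).symm
      _ ≤ _ := prod_le_prod (fun i _ => pow_nonneg hx _) fun i _ =>
          pow_sum_le_typeWeight_splitLevel hx hxv (s i) (b i)
  · rw [← card_range r, ← prod_const, card_range]
    exact prod_le_prod (fun i _ => by positivity) fun i _ =>
      inv_le_typeWeight_splitLevel hp hp1 (hsn _) hv hv1 (hb _) (hbv i)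

end Allocation

section Labelings

open Finset

variable {α κ : Type*} {d n M : ℕ}

/-- The number of elements of mass `d⁻⁽ⁱ⁺¹⁾`. -/
noncomputable def levelCount [Fintype α] (d : ℕ) (μ : α → ℝ) (i : ℕ) : ℕ :=
  #{x | μ x = ((d : ℝ) ^ (i + 1))⁻¹}

/-- `code` truncates `μ` to its first `M` levels: code `some i` stands for mass `d⁻⁽ⁱ⁺¹⁾`, and code
`none` for any other mass. -/
def IsLevelCode (d : ℕ) (μ : α → ℝ) (code : α → Option (Fin M)) : Prop :=
  ∀ x i, code x = some i ↔ μ x = ((d : ℝ) ^ (i + 1 : ℕ))⁻¹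

/-- The labelings all of whose small parts `some j` consist of coded elements of total mass
`1 / d`. -/
noncomputable def divLabelings (κ : Type*) [Fintype κ] [DecidableEq κ] [Fintype α] [DecidableEq α]
    (d : ℕ) (code : α → Option (Fin M)) : Finset (α → Option κ) :=
  {f | ∀ j, (∀ x, f x = some j → code x ≠ none) ∧
    ∑ i : Fin M, (#{x | code x = some i ∧ f x = some j} : ℝ) / d ^ (i : ℕ) = 1}

theorem inv_pow_succ_injective (hd : 2 ≤ d) :
    Function.Injective fun i : ℕ => ((d : ℝ) ^ (i + 1))⁻¹ := fun i j h => by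
  have hpow := pow_right_injective₀ (a := (d : ℝ)) (by positivity)
    (by exact_mod_cast (by omega : d ≠ 1)) (inv_injective h)
  exact Nat.succ_injective hpow

theorem exists_isLevelCode (hd : 2 ≤ d) (M : ℕ) (μ : α → ℝ) :
    ∃ code : α → Option (Fin M), IsLevelCode d μ code := by
  have hcode (x : α) : ∃ o : Option (Fin M), ∀ i, o = some i ↔ μ x = ((d : ℝ) ^ (i + 1 : ℕ))⁻¹ := by
    by_cases h : ∃ i : Fin M, μ x = ((d : ℝ) ^ (i + 1 : ℕ))⁻¹
    · obtain ⟨i, hi⟩ := h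
      refine ⟨some i, fun j => ?_⟩
      rw [hi, Option.some_inj, (inv_pow_succ_injective hd).eq_iff, Fin.ext_iff]
    · push Not at h
      exact ⟨none, fun i => by simpa using h i⟩
  choose code hcode using hcode
  exact ⟨code, hcode⟩

theorem sum_levelCount_le [Fintype α] (hd : 2 ≤ d) (μ : α → ℝ) (t : Finset ℕ) :
    ∑ i ∈ t, levelCount d μ i ≤ Fintype.card α := by
  classical
  simp only [levelCount]
  rw [← card_biUnion]
  · exact card_le_univ _
  · intro i _ j _ hij
    refine disjoint_filter.2 fun x _ hi hj => hij (inv_pow_succ_injective hd (hi.symm.trans hj))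

theorem exists_levelCount_eq_zero [Fintype α] (hd : 2 ≤ d) (μ : α → ℝ) :
    ∃ N, ∀ k ≥ N, levelCount d μ k = 0 := by
  have hfinite : {i : ℕ | ((d : ℝ) ^ (i + 1))⁻¹ ∈ Set.range μ}.Finite :=
    (Set.finite_range μ).preimage (inv_pow_succ_injective hd).injOn
  obtain ⟨N, hN⟩ := hfinite.bddAbove
  refine ⟨N + 1, fun k hk => ?_⟩
  refine card_eq_zero.2 (filter_eq_empty_iff.2 fun x _ hx => ?_)
  have := hN (show k ∈ _ from ⟨x, hx⟩)
  omega

theorem IsDadicDist.hasSum_levelCount {μ : Fin n → ℝ} (hμ : IsDadicDist d n μ) (hd : 2 ≤ d) :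
    HasSum (fun i => (levelCount d μ i : ℝ) / d ^ i) d := by
  have hd0 : (d : ℝ) ≠ 0 := Nat.cast_ne_zero.2 (by omega)
  have helement (x : Fin n) :
      HasSum (fun i => if μ x = ((d : ℝ) ^ (i + 1))⁻¹ then μ x else 0) (μ x) := by
    rcases hμ.2.2 x with h0 | ⟨l, hl, hx⟩
    · simp [h0, hasSum_zero]
    · convert hasSum_ite_eq (l - 1) (μ x) using 3 with i
      rw [hx, ← Nat.sub_add_cancel hl, (inv_pow_succ_injective hd).eq_iff, Nat.add_sub_cancel,
        eq_comm]
  have htotal := (hasSum_sum fun x (_ : x ∈ univ) => helement x).mul_left (d : ℝ)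
  rw [hμ.2.1, mul_one] at htotal
  refine htotal.congr_fun fun i => ?_
  have hlevel : ∑ x with μ x = ((d : ℝ) ^ (i + 1))⁻¹, μ x =
      levelCount d μ i * ((d : ℝ) ^ (i + 1))⁻¹ := by
    rw [sum_congr rfl fun x hx => (mem_filter_univ (p := fun x => μ x = _) x).1 hx, sum_const,
      nsmul_eq_mul, levelCount]
  rw [← sum_filter, hlevel, pow_succ]
  field_simp

variable [DecidableEq κ]

/-- The ordered partition into the classes of a labeling, with labels numbered by `e`. -/
def labelPartition (e : Option κ ≃ Fin d) (f : Fin n → Option κ) (j : Fin d) : Finset (Fin n) :=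
  {x | f x = e.symm j}

theorem isOrderedPartition_labelPartition (e : Option κ ≃ Fin d) (f : Fin n → Option κ) :
    IsOrderedPartition d n (labelPartition e f) := by
  refine ⟨fun i j hij => disjoint_filter.2 fun x _ hi hj => ?_, ?_⟩
  · exact hij (e.symm.injective (hi.symm.trans hj))
  · ext x
    simpa [labelPartition] using ⟨e (f x), by simp⟩

theorem memDiv_labelPartition [Finite κ] (e : Option κ ≃ Fin d) {μ : Fin n → ℝ} (hμ : ∑ x, μ x = 1)
    {f : Fin n → Option κ} (hf : ∀ j, ∑ x with f x = some j, μ x = 1 / (d : ℝ)) :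
    MemDiv d n μ (labelPartition e f) := by
  have := Fintype.ofFinite κ
  have hcard : (Fintype.card κ : ℝ) + 1 = d := by
    exact_mod_cast (Fintype.card_option.symm.trans (Fintype.card_congr e)).trans
      (Fintype.card_fin d)
  have hd : (d : ℝ) ≠ 0 := by
    rw [← hcard]; positivity
  have hnone : ∑ x with f x = none, μ x = 1 / (d : ℝ) := by
    have htotal := sum_fiberwise univ f μ
    rw [hμ, Fintype.sum_option, sum_congr rfl fun j _ => hf j, sum_const, card_univ,
      nsmul_eq_mul, ← eq_sub_iff_add_eq, eq_sub_iff_add_eq.2 hcard] at htotal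
    rw [htotal]
    field_simp
    ring
  refine ⟨isOrderedPartition_labelPartition e f, fun j => ?_⟩
  rw [labelPartition]
  rcases e.symm j with _ | i
  · exact hnone
  · exact hf i

variable [Fintype κ] [Fintype α] [DecidableEq α]

theorem sum_mass_eq_of_mem_divLabelings (hd : 0 < d) {μ : α → ℝ}
    {code : α → Option (Fin M)} (hcode : IsLevelCode d μ code) {f : α → Option κ}
    (hf : f ∈ divLabelings κ d code) (j : κ) : ∑ x with f x = some j, μ x = 1 / (d : ℝ) := by
  obtain ⟨hcoded, hmass⟩ := (mem_filter_univ f).1 hf j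
  have hd0 : (d : ℝ) ≠ 0 := Nat.cast_ne_zero.2 hd.ne'
  rw [← sum_fiberwise _ code, Fintype.sum_option, filter_filter,
    filter_false_of_mem fun x _ hx => hcoded x hx.1 hx.2, sum_empty, zero_add, ← hmass, sum_div]
  refine sum_congr rfl fun i _ => ?_
  rw [filter_filter, sum_congr rfl fun x hx =>
    (hcode x i).1 ((mem_filter_univ x).1 hx).2, sum_const, nsmul_eq_mul, pow_succ]
  simp only [and_comm]
  field_simp

theorem exists_hitting_divLabelings (d M : ℕ) {c : Option κ → ℕ}
    (hc : ∑ j, c j = Fintype.card α) {ρ : ℝ} (hρ : 0 < ρ) :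
    ∃ Q : Finset (α → Option κ), (#Q : ℝ) ≤ Fintype.card α * Real.log (M + 1) / ρ + 1 ∧
      ∀ code : α → Option (Fin M),
        ρ * #(typeClass α c) ≤ #(divLabelings κ d code ∩ typeClass α c) →
          ∃ f ∈ Q, f ∈ divLabelings κ d code := by
  let I := {code : α → Option (Fin M) //
    ρ * #(typeClass α c) ≤ #(divLabelings κ d code ∩ typeClass α c)}
  obtain ⟨Q, -, hQ, hhit⟩ := exists_hitting_set (exists_mem_typeClass hc) (I := I)
    (A := fun code => divLabelings κ d code.1 ∩ typeClass α c) (fun _ => inter_subset_right) hρ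
    fun code => code.2
  have hI : Fintype.card I ≤ (M + 1) ^ Fintype.card α :=
    (Fintype.card_subtype_le _).trans (by simp)
  have hlog : Real.log (Fintype.card I) ≤ Fintype.card α * Real.log (M + 1) := by
    rcases (Fintype.card I).eq_zero_or_pos with h0 | hpos
    · rw [h0, Nat.cast_zero, Real.log_zero]
      exact mul_nonneg (Nat.cast_nonneg _) (Real.log_nonneg (by simp))
    · rw [← Real.log_pow]
      exact Real.log_le_log (by exact_mod_cast hpos) (by exact_mod_cast hI)
  refine ⟨Q, hQ.trans (by gcongr), fun code hcode => ?_⟩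
  obtain ⟨f, hfQ, hf⟩ := hhit ⟨code, hcode⟩
  exact ⟨f, hfQ, (mem_inter.1 hf).1⟩

theorem exists_isHitter_card_le (e : Option κ ≃ Fin d) {ρ : ℝ} (hρ : 0 < ρ)
    (hdense : ∀ μ, IsDadicDist d n μ → ∃ code : Fin n → Option (Fin M), IsLevelCode d μ code ∧
      ∃ c : Option κ → ℕ, ∑ j, c j = n ∧ ρ * #(typeClass (Fin n) c) ≤
        #(divLabelings κ d code ∩ typeClass (Fin n) c)) :
    ∃ Q, IsHitter d n Q ∧ (#Q : ℝ) ≤ ((n : ℝ) + 1) ^ d * (n * Real.log (M + 1) / ρ + 1) := by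
  have hhit (c : piAntidiag (univ : Finset (Option κ)) n) :=
    exists_hitting_divLabelings (α := Fin n) d M
      ((mem_piAntidiag.1 c.2).1.trans (Fintype.card_fin n).symm) hρ
  simp only [Fintype.card_fin] at hhit
  choose Q hQ hhit using hhit
  refine ⟨(univ.biUnion Q).image (labelPartition e), ⟨fun S hS => ?_, fun μ hμ _ => ?_⟩, ?_⟩
  · obtain ⟨f, -, rfl⟩ := mem_image.1 hS
    exact isOrderedPartition_labelPartition e f
  · obtain ⟨code, hcode, c, hc, hρc⟩ := hdense μ hμ
    obtain ⟨f, hfQ, hf⟩ := hhit ⟨c, mem_piAntidiag.2 ⟨hc, by simp⟩⟩ code hρc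
    exact ⟨_, mem_image_of_mem _ (mem_biUnion.2 ⟨_, mem_univ _, hfQ⟩),
      memDiv_labelPartition e hμ.2.1 (sum_mass_eq_of_mem_divLabelings (e none).pos hcode hf)⟩
  · have htypes : (#(piAntidiag (univ : Finset (Option κ)) n) : ℝ) ≤ ((n : ℝ) + 1) ^ d := by
      rw [← Fintype.card_fin d, ← Fintype.card_congr e]
      exact_mod_cast card_piAntidiag_univ_le n
    have hlog : 0 ≤ Real.log ((M : ℝ) + 1) := Real.log_nonneg (by simp)
    calc (#((univ.biUnion Q).image (labelPartition e)) : ℝ)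
        ≤ ∑ c, (#(Q c) : ℝ) := by exact_mod_cast card_image_le.trans card_biUnion_le
      _ ≤ ∑ _c : piAntidiag (univ : Finset (Option κ)) n, (n * Real.log (M + 1) / ρ + 1) :=
          sum_le_sum fun c _ => hQ c
      _ = #(piAntidiag (univ : Finset (Option κ)) n) * (n * Real.log (M + 1) / ρ + 1) := by
          rw [sum_const, card_univ, Fintype.card_coe, nsmul_eq_mul]
      _ ≤ ((n : ℝ) + 1) ^ d * (n * Real.log (M + 1) / ρ + 1) := by gcongr

end Labelings

section HitDensity

open Finset

variable {κ : Type*} [Fintype κ] {d n m r M : ℕ}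

theorem condTypeClass_subset_divLabelings {α : Type*} [Fintype α] [DecidableEq α]
    [DecidableEq κ] {code : α → Option (Fin M)} {a : Option (Fin M) → Option κ → ℕ}
    (hnone : ∀ j, a none (some j) = 0)
    (hmass : ∀ j, ∑ i : Fin M, (a (some i) (some j) : ℝ) / d ^ (i : ℕ) = 1) :
    condTypeClass code a ⊆ divLabelings κ d code := by
  intro f hf
  rw [mem_condTypeClass] at hf
  refine (mem_filter_univ f).2 fun j => ⟨fun x hx hcode => ?_, ?_⟩
  · have hempty := (hf none (some j)).trans (hnone j)
    exact filter_eq_empty_iff.1 (card_eq_zero.1 hempty) (mem_univ x) ⟨hcode, hx⟩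
  · simpa only [hf] using hmass j

theorem IsLevelCode.card_filter_eq_some {α : Type*} [Fintype α] {μ : α → ℝ}
    {code : α → Option (Fin M)} (hcode : IsLevelCode d μ code) (i : Fin M) :
    #{x | code x = some i} = levelCount d μ i := by
  simp only [levelCount, hcode _ i]

/-- The uncoded elements all go to the big part, and level `i` is split according to `b i`. -/
def codeAllocation {α : Type*} [Fintype α] (code : α → Option (Fin M)) (b : ℕ → κ → ℕ)
    (o : Option (Fin M)) : Option κ → ℕ :=
  splitLevel #{x | code x = o} (o.elim 0 fun i => b i)

theorem sum_codeAllocation {α : Type*} [Fintype α] {μ : α → ℝ} {code : α → Option (Fin M)}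
    (hcode : IsLevelCode d μ code) {b : ℕ → κ → ℕ} (hb : ∀ i, ∑ j, b i j ≤ levelCount d μ i)
    (o : Option (Fin M)) : ∑ j, codeAllocation code b o j = #{x | code x = o} := by
  refine sum_splitLevel ?_
  rcases o with _ | i
  · simp
  · simpa only [hcode.card_filter_eq_some, Option.elim_some] using hb i

theorem prod_typeWeight_splitLevel_le_prod_codeAllocation {α : Type*} [Fintype α] {μ : α → ℝ}
    {code : α → Option (Fin M)} (hcode : IsLevelCode d μ code) (b : ℕ → κ → ℕ) {p : ℝ}
    (hp : 0 < p) {v : κ → ℝ} (hv : ∀ j, 0 < v j) :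
    ∏ i ∈ range M, typeWeight (partWeight p v) (splitLevel (levelCount d μ i) (b i)) ≤
      ∏ o, typeWeight (partWeight p v) (codeAllocation code b o) := by
  rw [Fintype.prod_option, prod_range]
  simp only [codeAllocation, hcode.card_filter_eq_some, Option.elim]
  refine le_mul_of_one_le_left (prod_nonneg fun i _ => ?_) ?_
  · exact typeWeight_nonneg (fun j => (partWeight_pos hp hv j).le) _
  · simpa using pow_sum_le_typeWeight_splitLevel le_rfl
      (fun j => (mul_pos (smallWeight_pos hp) (hv j)).le) #{x | code x = none} 0

/-- A lower bound for the proportion of dividing labelings in some type class, obtained with `r`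
proportionally rounded levels after `m` greedily split ones. -/
noncomputable def hitDensity (d n m r : ℕ) (η : ℝ) : ℝ :=
  (smallWeight (1 / d - η) * (η / (2 * d))) ^ (d * d ^ m) * (((n : ℝ) + 1) ^ d)⁻¹ ^ r /
    hitterRate (1 / d - η) ^ n

theorem hitDensity_pos (hd : 0 < d) {η : ℝ} (hη : 0 < η) (hηd : η < 1 / d) (n m r : ℕ) :
    0 < hitDensity d n m r η := by
  have hp : 0 < 1 / (d : ℝ) - η := sub_pos.2 hηd
  have hp1 : 1 / (d : ℝ) - η < 1 := by
    linarith [div_le_one_of_le₀ (by exact_mod_cast hd : (1 : ℝ) ≤ d) (Nat.cast_nonneg _)]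
  have := smallWeight_pos hp
  have := hitterRate_pos hp hp1
  unfold hitDensity
  positivity

variable [DecidableEq κ]

theorem IsDadicDist.exists_hitDensity_mul_card_le {μ : Fin n → ℝ} (hμ : IsDadicDist d n μ)
    (hd : 2 ≤ d) (hκ : Fintype.card κ + 1 = d) {η : ℝ} (hη : 0 < η) (hηd : η < 1 / d)
    (hn : 2 * n ≤ r * (η * d ^ m)) (hr : 4 * d ^ 2 * r ≤ η ^ 2 * d ^ m) :
    ∃ code : Fin n → Option (Fin (m + r)), IsLevelCode d μ code ∧
      ∃ c : Option κ → ℕ, ∑ j, c j = n ∧ hitDensity d n m r η * #(typeClass (Fin n) c) ≤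
        #(divLabelings κ d code ∩ typeClass (Fin n) c) := by
  have hd0 : (0 : ℝ) < d := Nat.cast_pos.2 (by omega)
  have hd1 : (1 : ℝ) ≤ d := by exact_mod_cast (by omega : 1 ≤ d)
  have hd1' : 1 / (d : ℝ) ≤ 1 := (div_le_one hd0).2 hd1
  have hp : 0 < 1 / (d : ℝ) - η := sub_pos.2 hηd
  have hp1 : 1 / (d : ℝ) - η < 1 := by linarith
  have hη2 : η / (2 * d) ≤ 1 := by
    rw [div_le_one (by positivity)]
    linarith
  have hlevels (t : Finset ℕ) : ∑ i ∈ t, levelCount d μ i ≤ n := by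
    simpa using sum_levelCount_le hd μ t
  obtain ⟨v, hηv, hv1, b, hb, hbv, hmass⟩ := exists_allocation hd hκ hη hηd hn hr
    (hμ.hasSum_levelCount hd) (exists_levelCount_eq_zero hd μ) hlevels
  obtain ⟨code, hcode⟩ := exists_isLevelCode hd (m + r) μ
  have hv (j : κ) : 0 < v j := lt_of_lt_of_le (by positivity) (hηv j)
  have hsum := sum_codeAllocation hcode hb
  have hweight := (pow_mul_inv_pow_le_prod_typeWeight (by omega : 0 < d) (by omega) hp hp1
    (mul_nonneg (smallWeight_pos hp).le (by positivity))
    (mul_le_one₀ (smallWeight_le_one hp hp1) (by positivity) hη2) hv hv1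
    (fun j => mul_le_mul_of_nonneg_left (hηv j) (smallWeight_pos hp).le)
    (fun i => by simpa using hlevels {i}) hb hbv hmass).trans
    (prod_typeWeight_splitLevel_le_prod_codeAllocation hcode b hp hv)
  rw [Fintype.card_option, hκ] at hweight
  have hdense := div_pow_mul_card_typeClass_le code hsum (partWeight_pos hp hv)
    (hitterRate_pos hp hp1) (sum_partWeight_le hp hv1) hweight
  rw [Fintype.card_fin, ← hitDensity] at hdense
  refine ⟨code, hcode, fun j => ∑ o, codeAllocation code b o j, ?_, hdense.trans ?_⟩
  · rw [sum_comm, sum_congr rfl fun o _ => hsum o, ← card_eq_sum_card_fiberwise (by simp),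
      card_univ, Fintype.card_fin]
  · refine Nat.cast_le.2 (card_le_card (subset_inter
      (condTypeClass_subset_divLabelings (fun j => rfl) fun j => ?_)
      (condTypeClass_subset_typeClass code _)))
    rw [← hmass j, sum_range]
    rfl

theorem exists_isHitter_card_le_div_hitDensity (hd : 2 ≤ d) {η : ℝ} (hη : 0 < η) (hηd : η < 1 / d)
    (hn : 2 * n ≤ r * (η * d ^ m)) (hr : 4 * d ^ 2 * r ≤ η ^ 2 * d ^ m) :
    ∃ Q, IsHitter d n Q ∧ (#Q : ℝ) ≤
      ((n : ℝ) + 1) ^ d * (n * Real.log ((m + r : ℕ) + 1) / hitDensity d n m r η + 1) := by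
  have hκ : Fintype.card (Fin (d - 1)) + 1 = d := by rw [Fintype.card_fin]; omega
  exact exists_isHitter_card_le (Fintype.equivFinOfCardEq (Fintype.card_option.trans hκ))
    (hitDensity_pos (by omega) hη hηd n m r)
    fun μ hμ => hμ.exists_hitDensity_mul_card_le hd hκ hη hηd hn hr

end HitDensity

section UpperBound

open Finset Filter Topology

variable {d : ℕ}

theorem eventually_natCast_add_pow_le_exp (k : ℕ) (c : ℝ) {e : ℝ} (he : 0 < e) :
    ∀ᶠ n : ℕ in atTop, ((n : ℝ) + c) ^ k ≤ Real.exp (e * n) := by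
  have hbound := (isLittleO_pow_exp_pos_mul_atTop k he).bound (Real.exp_pos (-(e * c)))
  have hshift : Tendsto (fun n : ℕ => (n : ℝ) + c) atTop atTop :=
    tendsto_atTop_add_const_right _ _ tendsto_natCast_atTop_atTop
  filter_upwards [hshift.eventually hbound] with n hn
  refine (Real.le_norm_self _).trans (hn.trans_eq ?_)
  rw [Real.norm_eq_abs, Real.abs_exp, ← Real.exp_add]
  congr 1
  ring

theorem exists_eventually_window (hd : 2 ≤ d) {η ζ : ℝ} (hη : 0 < η) (hζ : 0 < ζ) :
    ∃ r : ℕ, ∀ᶠ n : ℕ in atTop, ∃ m : ℕ, (d : ℝ) ^ m ≤ ζ * n ∧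
      2 * n ≤ r * (η * d ^ m) ∧ 4 * d ^ 2 * r ≤ η ^ 2 * d ^ m := by
  have hd0 : (0 : ℝ) < d := Nat.cast_pos.2 (by omega)
  obtain ⟨r, hr⟩ := exists_nat_ge (2 * d / (η * ζ))
  rw [div_le_iff₀ (by positivity)] at hr
  have hlarge (C : ℝ) : ∀ᶠ n : ℕ in atTop, C ≤ ζ * n :=
    (tendsto_natCast_atTop_atTop.const_mul_atTop hζ).eventually_ge_atTop C
  refine ⟨r, ?_⟩
  filter_upwards [hlarge 1, hlarge (4 * d ^ 3 * r / η ^ 2)] with n hn1 hnr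
  rw [div_le_iff₀ (by positivity)] at hnr
  obtain ⟨m, hm, hm'⟩ := exists_nat_pow_near hn1 (by exact_mod_cast hd : (1 : ℝ) < d)
  rw [pow_succ] at hm'
  refine ⟨m, hm, ?_, ?_⟩
  · refine le_of_mul_le_mul_left ?_ (mul_pos hd0 hζ)
    calc d * ζ * (2 * n) = 2 * d * (ζ * n) := by ring
      _ ≤ r * (η * ζ) * (d ^ m * d) := by gcongr
      _ = d * ζ * (r * (η * d ^ m)) := by ring
  · refine le_of_mul_le_mul_left ?_ hd0
    calc d * (4 * d ^ 2 * r) = 4 * (d : ℝ) ^ 3 * r := by ring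
      _ ≤ ζ * n * η ^ 2 := hnr
      _ ≤ d ^ m * d * η ^ 2 := by gcongr
      _ = d * (η ^ 2 * d ^ m) := by ring

theorem exists_exp_neg_le_pow {x : ℝ} (hx : 0 < x) (d : ℕ) {e : ℝ} (he : 0 < e) :
    ∃ ζ > 0, ζ ≤ 1 ∧ ∀ k n : ℕ, (k : ℝ) ≤ ζ * n → Real.exp (-(e * n)) ≤ x ^ (d * k) := by
  set A : ℝ := d * |Real.log x|
  have hA : 0 ≤ A := by positivity
  refine ⟨e / (A + e), by positivity, (div_le_one (by positivity)).2 (by linarith),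
    fun k n hk => ?_⟩
  have hA' : A * (e / (A + e)) ≤ e := by
    rw [mul_div_assoc', div_le_iff₀ (by positivity)]
    nlinarith
  rw [← Real.exp_log (pow_pos hx _), Real.exp_le_exp, Real.log_pow, neg_le]
  calc -((d * k : ℕ) * Real.log x) = d * k * -Real.log x := by push_cast; ring
    _ ≤ d * k * |Real.log x| := by gcongr; exact neg_le_abs _
    _ = A * k := by ring
    _ ≤ A * (e / (A + e) * n) := by gcongr
    _ = A * (e / (A + e)) * n := by ring
    _ ≤ e * n := by gcongr

theorem inv_hitDensity_le (hd : 0 < d) {η : ℝ} (hη : 0 < η) (hηd : η < 1 / d) {n m r : ℕ} {E : ℝ}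
    (hE : Real.exp (-E) ≤ (smallWeight (1 / d - η) * (η / (2 * d))) ^ (d * d ^ m)) :
    (hitDensity d n m r η)⁻¹ ≤
      Real.exp E * hitterRate (1 / d - η) ^ n * ((n : ℝ) + 1) ^ (d * r) := by
  have hp : 0 < 1 / (d : ℝ) - η := sub_pos.2 hηd
  have hx := smallWeight_pos hp
  have hx' : 1 ≤ Real.exp E * (smallWeight (1 / d - η) * (η / (2 * d))) ^ (d * d ^ m) := by
    rwa [Real.exp_neg, inv_le_iff_one_le_mul₀' (Real.exp_pos E)] at hE
  have hcancel : ((n : ℝ) + 1) ^ (d * r) * (((n : ℝ) + 1) ^ d)⁻¹ ^ r = 1 := by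
    rw [pow_mul, ← mul_pow, mul_inv_cancel₀ (by positivity), one_pow]
  have hrate : 0 < hitterRate (1 / d - η) := hitterRate_pos hp (by
    linarith [div_le_one_of_le₀ (by exact_mod_cast hd : (1 : ℝ) ≤ d) (Nat.cast_nonneg _)])
  rw [hitDensity, inv_div, div_le_iff₀ (by positivity)]
  calc hitterRate (1 / d - η) ^ n
      ≤ hitterRate (1 / d - η) ^ n *
          (Real.exp E * (smallWeight (1 / d - η) * (η / (2 * d))) ^ (d * d ^ m)) :=
        le_mul_of_one_le_right (by positivity) hx'
    _ = hitterRate (1 / d - η) ^ n *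
          (Real.exp E * (smallWeight (1 / d - η) * (η / (2 * d))) ^ (d * d ^ m)) *
          (((n : ℝ) + 1) ^ (d * r) * (((n : ℝ) + 1) ^ d)⁻¹ ^ r) := by rw [hcancel, mul_one]
    _ = _ := by ring

theorem pow_mul_div_add_one_le {d n r : ℕ} {L ρ E : ℝ} (hL : L ≤ n + r) (hL0 : 0 ≤ L) (hE : 1 ≤ E)
    (hρ : ρ⁻¹ ≤ E * ((n : ℝ) + 1) ^ (d * r)) :
    ((n : ℝ) + 1) ^ d * (n * L / ρ + 1) ≤ ((n : ℝ) + (r + 1)) ^ (d + d * r + 2) * E := by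
  have hB : (n : ℝ) + 1 ≤ n + (r + 1) := by linarith [r.cast_nonneg (α := ℝ)]
  have hB1 : (1 : ℝ) ≤ n + (r + 1) := by linarith [n.cast_nonneg (α := ℝ)]
  set B : ℝ := n + (r + 1)
  have hfirst : n * L / ρ ≤ n * B * (E * B ^ (d * r)) := by
    rw [div_eq_mul_inv]
    have : 0 ≤ E := by linarith
    have hLB : L ≤ B := by linarith
    refine mul_le_mul_of_nonneg (by gcongr) (hρ.trans (by gcongr)) (by positivity) (by positivity)
  have hone : 1 ≤ B * (E * B ^ (d * r)) :=
    one_le_mul_of_one_le_of_one_le hB1 (one_le_mul_of_one_le_of_one_le hE (one_le_pow₀ hB1))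
  calc ((n : ℝ) + 1) ^ d * (n * L / ρ + 1)
      ≤ B ^ d * (n * B * (E * B ^ (d * r)) + B * (E * B ^ (d * r))) :=
        mul_le_mul_of_nonneg (by gcongr) (add_le_add hfirst hone) (by positivity) (by positivity)
    _ = B ^ d * B ^ (d * r) * B * (n + 1) * E := by ring
    _ ≤ B ^ d * B ^ (d * r) * B * B * E := by gcongr
    _ = B ^ (d + d * r + 2) * E := by ring

theorem eventually_exists_isHitter_card_le_exp_mul (hd : 2 ≤ d) {η e : ℝ} (hη : 0 < η)
    (hηd : η < 1 / d) (he : 0 < e) :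
    ∀ᶠ n : ℕ in atTop, ∃ Q, IsHitter d n Q ∧
      (#Q : ℝ) ≤ Real.exp (2 * e * n) * hitterRate (1 / d - η) ^ n := by
  have hd0 : (0 : ℝ) < d := Nat.cast_pos.2 (by omega)
  have hp : 0 < 1 / (d : ℝ) - η := sub_pos.2 hηd
  have hp1 : 1 / (d : ℝ) - η < 1 := by
    linarith [div_le_one_of_le₀ (by exact_mod_cast (by omega : 1 ≤ d) : (1 : ℝ) ≤ d) hd0.le]
  have hx : 0 < smallWeight (1 / d - η) * (η / (2 * d)) :=
    mul_pos (smallWeight_pos hp) (by positivity)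
  obtain ⟨ζ, hζ, hζ1, hdense⟩ := exists_exp_neg_le_pow hx d he
  obtain ⟨r, hwindow⟩ := exists_eventually_window hd hη hζ
  filter_upwards [hwindow, eventually_natCast_add_pow_le_exp (d + d * r + 2) (r + 1) he]
    with n ⟨m, hm, hn, hr⟩ hpoly
  obtain ⟨Q, hQ, hQc⟩ := exists_isHitter_card_le_div_hitDensity hd hη hηd hn hr
  have hmn : (m : ℝ) ≤ n := by
    calc (m : ℝ) ≤ d ^ m := by exact_mod_cast (Nat.lt_pow_self (by omega : 1 < d)).le
      _ ≤ ζ * n := hm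
      _ ≤ n := mul_le_of_le_one_left n.cast_nonneg hζ1
  have hlog : Real.log ((m + r : ℕ) + 1) ≤ n + r := by
    have := Real.log_le_sub_one_of_pos (by positivity : (0 : ℝ) < (m + r : ℕ) + 1)
    push_cast at this ⊢
    linarith
  have hrate : 1 ≤ Real.exp (e * n) * hitterRate (1 / d - η) ^ n :=
    one_le_mul_of_one_le_of_one_le (Real.one_le_exp (by positivity))
      (one_le_pow₀ (one_le_hitterRate hp hp1))
  refine ⟨Q, hQ, hQc.trans ?_⟩
  calc _ ≤ ((n : ℝ) + (r + 1)) ^ (d + d * r + 2) *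
          (Real.exp (e * n) * hitterRate (1 / d - η) ^ n) :=
        pow_mul_div_add_one_le hlog (Real.log_nonneg (le_add_of_nonneg_left (Nat.cast_nonneg _)))
          hrate
          (inv_hitDensity_le (by omega) hη hηd (hdense (d ^ m) n (by exact_mod_cast hm)))
    _ ≤ Real.exp (e * n) * (Real.exp (e * n) * hitterRate (1 / d - η) ^ n) := by gcongr
    _ = Real.exp (2 * e * n) * hitterRate (1 / d - η) ^ n := by
        rw [← mul_assoc, ← Real.exp_add]
        ring_nf

theorem eventually_exists_isHitter_card_le_pow (hd : 2 ≤ d) {c : ℝ}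
    (hc : hitterRate (d : ℝ)⁻¹ < c) :
    ∀ᶠ n : ℕ in atTop, ∃ Q, IsHitter d n Q ∧ (#Q : ℝ) ≤ c ^ n := by
  rw [← one_div] at hc
  have hd1 : (1 : ℝ) < d := by exact_mod_cast hd
  have hp : 0 < 1 / (d : ℝ) := by positivity
  have hcont : Tendsto (fun η : ℝ => hitterRate (1 / d - η)) (𝓝[>] 0) (𝓝 (hitterRate (1 / d))) := by
    have hsub : Tendsto (fun η : ℝ => 1 / d - η) (𝓝[>] 0) (𝓝 (1 / (d : ℝ))) :=
      (Continuous.tendsto' (by fun_prop) _ _ (sub_zero _)).mono_left nhdsWithin_le_nhds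
    exact (continuousAt_hitterRate hp ((div_lt_one (by linarith)).2 hd1)).tendsto.comp hsub
  obtain ⟨η, hηc, hη, hηd⟩ := ((hcont.eventually_lt_const hc).and (Ioo_mem_nhdsGT hp)).exists
  have hrate : 0 < hitterRate (1 / d - η) :=
    hitterRate_pos (sub_pos.2 hηd) (by linarith [(div_lt_one (by linarith)).2 hd1])
  set e := Real.log (c / hitterRate (1 / d - η)) / 2 with he
  have he0 : 0 < e := half_pos (Real.log_pos ((one_lt_div hrate).2 hηc))
  filter_upwards [eventually_exists_isHitter_card_le_exp_mul hd hη hηd he0] with n ⟨Q, hQ, hQc⟩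
  refine ⟨Q, hQ, hQc.trans_eq ?_⟩
  rw [he, mul_div_cancel₀ _ two_ne_zero, mul_comm _ (n : ℝ), Real.exp_nat_mul,
    Real.exp_log (div_pos (hrate.trans hηc) hrate), ← mul_pow, div_mul_cancel₀ _ hrate.ne']

end UpperBound

section LowerCounting

open Finset

variable {α κ : Type*} [Fintype α] [Fintype κ] [DecidableEq κ]

theorem card_perm_comp_eq_mul_pow_self_le [DecidableEq α] (f g : α → κ) :
    #{σ : Equiv.Perm α | f ∘ σ = g} * Fintype.card α ^ Fintype.card α ≤
      (Fintype.card α).factorial * ((Fintype.card α + 1) ^ Fintype.card κ *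
        ∏ j, (#{x | g x = j}) ^ (#{x | g x = j})) := by
  have hsum : ∑ j, #{x | g x = j} = Fintype.card α :=
    (card_eq_sum_card_fiberwise (by simp)).symm
  have hmultinomial := Nat.multinomial_spec univ fun j => #{x | g x = j}
  have hpow := sum_pow_sum_le_multinomial_mul_prod_pow_self fun j => #{x | g x = j}
  rw [hsum] at hmultinomial hpow
  calc _ ≤ (∏ j, (#{x | g x = j}).factorial) * ((Fintype.card α + 1) ^ Fintype.card κ *
        (Nat.multinomial univ (fun j => #{x | g x = j}) *
          ∏ j, (#{x | g x = j}) ^ (#{x | g x = j}))) := by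
        gcongr
        exact card_perm_comp_eq_le f g
    _ = _ := by rw [← hmultinomial]; ring

theorem card_pow_self_le_of_forall_perm_exists_comp_mem {F D : Finset (α → κ)} {P : ℕ}
    (hP : ∀ g ∈ D, ∏ j, (#{x | g x = j}) ^ (#{x | g x = j}) ≤ P)
    (hF : ∀ σ : Equiv.Perm α, ∃ f ∈ F, f ∘ σ ∈ D) :
    Fintype.card α ^ Fintype.card α ≤
      (Fintype.card α + 1) ^ Fintype.card κ * (#F * (#D * P)) := by
  classical
  have hcover : (univ : Finset (Equiv.Perm α)) ⊆
      (F ×ˢ D).biUnion fun p => {σ | p.1 ∘ σ = p.2} := fun σ _ => by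
    obtain ⟨f, hf, hfD⟩ := hF σ
    exact mem_biUnion.2 ⟨(f, f ∘ σ), mk_mem_product hf hfD, by simp⟩
  refine Nat.le_of_mul_le_mul_left ?_ (Fintype.card α).factorial_pos
  calc (Fintype.card α).factorial * Fintype.card α ^ Fintype.card α
      = #(univ : Finset (Equiv.Perm α)) * Fintype.card α ^ Fintype.card α := by
        rw [card_univ, Fintype.card_perm]
    _ ≤ ∑ p ∈ F ×ˢ D, #{σ : Equiv.Perm α | p.1 ∘ σ = p.2} * Fintype.card α ^ Fintype.card α := by
        rw [← sum_mul]
        gcongr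
        exact (card_le_card hcover).trans card_biUnion_le
    _ ≤ ∑ _p ∈ F ×ˢ D, (Fintype.card α).factorial *
          ((Fintype.card α + 1) ^ Fintype.card κ * P) := by
        refine sum_le_sum fun p hp => (card_perm_comp_eq_mul_pow_self_le p.1 p.2).trans ?_
        gcongr
        exact hP _ (mem_product.1 hp).2
    _ = _ := by
        rw [sum_const, card_product, smul_eq_mul]
        ring

theorem dvd_card_filter_eq_of_sum_inv_pow_eq {ι : Type*} {S : Finset ι} {lev : ι → ℕ} {d e l : ℕ}
    (hd : d ≠ 0) (hle : ∀ x ∈ S, lev x ≤ e) (hl : l < e)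
    (hsum : ∑ x ∈ S, ((d : ℝ) ^ lev x)⁻¹ = ((d : ℝ) ^ l)⁻¹) : d ∣ #{x ∈ S | lev x = e} := by
  have hscale {k : ℕ} (hk : k ≤ e) : (d : ℝ) ^ e * ((d : ℝ) ^ k)⁻¹ = (d ^ (e - k) : ℕ) := by
    rw [Nat.cast_pow, pow_sub₀ _ (Nat.cast_ne_zero.2 hd) hk]
  have hnat : ∑ x ∈ S, d ^ (e - lev x) = d ^ (e - l) := by
    have h := congrArg ((d : ℝ) ^ e * ·) hsum
    simp only [mul_sum, hscale hl.le, sum_congr rfl fun x hx => hscale (hle x hx)] at h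
    exact_mod_cast h
  have hlow : d ∣ ∑ x ∈ S with lev x ≠ e, d ^ (e - lev x) := dvd_sum fun x hx => by
    obtain ⟨hx, hne⟩ := mem_filter.1 hx
    exact dvd_pow_self d (Nat.sub_ne_zero_of_lt ((hle x hx).lt_of_ne hne))
  have htop : ∑ x ∈ S with lev x = e, d ^ (e - lev x) = #{x ∈ S | lev x = e} := by
    rw [card_eq_sum_ones]
    exact sum_congr rfl fun x hx => by rw [(mem_filter.1 hx).2, Nat.sub_self, pow_zero]
  rw [← htop, ← Nat.dvd_add_left hlow, sum_filter_add_sum_filter_not, hnat]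
  exact dvd_pow_self d (Nat.sub_ne_zero_of_lt hl)

end LowerCounting

section Tail

open Finset

/-- Index type of the tail distribution: `d ^ a - 1` elements of mass `d⁻ᵃ`, then `d - 1` elements
of mass `d⁻⁽ᵃ⁺¹⁺ⁱ⁾` for each `i < L`, and one last element which repeats the lightest mass. -/
abbrev TailIndex (d a L : ℕ) := Fin (d ^ a - 1) ⊕ (Fin L × Fin (d - 1)) ⊕ Unit

/-- The exponent `l` of the mass `d⁻ˡ` of an element of `TailIndex d a L`. -/
def tailLevel {d a L : ℕ} : TailIndex d a L → ℕ :=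
  Sum.elim (fun _ => a) (Sum.elim (fun q => a + 1 + q.1) fun _ => a + L)

/-- The last element of `TailIndex d a L`. -/
def tailEnd {d a L : ℕ} : TailIndex d a L := Sum.inr (Sum.inr ())

/-- The labelings of `TailIndex d a L` whose `d` classes all have mass `1 / d`. -/
noncomputable def fairLabelings (d a L : ℕ) : Finset (TailIndex d a L → Fin d) :=
  {f | ∀ j, ∑ x with f x = j, ((d : ℝ) ^ tailLevel x)⁻¹ = 1 / (d : ℝ)}

variable {d a L : ℕ}

theorem mem_fairLabelings {f : TailIndex d a L → Fin d} : f ∈ fairLabelings d a L ↔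
    ∀ j, ∑ x with f x = j, ((d : ℝ) ^ tailLevel x)⁻¹ = 1 / (d : ℝ) := by
  simp [fairLabelings]

theorem card_tailIndex (hd : 0 < d) : Fintype.card (TailIndex d a L) = d ^ a + L * (d - 1) := by
  have := Nat.pow_pos (n := a) hd
  simp only [Fintype.card_sum, Fintype.card_fin, Fintype.card_prod, Fintype.card_unit]
  omega

theorem one_le_tailLevel (ha : 1 ≤ a) (x : TailIndex d a L) : 1 ≤ tailLevel x := by
  rcases x with x | x | x <;> simp only [tailLevel, Sum.elim_inl, Sum.elim_inr] <;> omega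

theorem sum_inv_pow_tailLevel (hd : 0 < d) :
    ∑ x : TailIndex d a L, ((d : ℝ) ^ tailLevel x)⁻¹ = 1 := by
  have hd0 : (d : ℝ) ≠ 0 := by positivity
  have htelescope (i : ℕ) : ((d : ℝ) - 1) * ((d : ℝ) ^ (a + 1 + i))⁻¹ =
      ((d : ℝ) ^ (a + i))⁻¹ - ((d : ℝ) ^ (a + (i + 1)))⁻¹ := by
    rw [add_right_comm, ← add_assoc, pow_succ]
    field_simp
  simp only [Fintype.sum_sum_type, Fintype.sum_prod_type, tailLevel, Sum.elim_inl, Sum.elim_inr,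
    sum_const, card_univ, Fintype.card_fin, nsmul_eq_mul, Fintype.card_unit, Nat.cast_one, one_mul]
  rw [Nat.cast_sub (Nat.pow_pos hd), Nat.cast_sub hd, Nat.cast_pow, Nat.cast_one,
    ← sum_range fun i => ((d : ℝ) - 1) * ((d : ℝ) ^ (a + 1 + i))⁻¹,
    sum_congr rfl fun i _ => htelescope i, sum_range_sub', sub_mul,
    mul_inv_cancel₀ (pow_ne_zero _ hd0), add_zero]
  ring

theorem card_filter_tailLevel_lt (hd : 0 < d) {S : Finset (TailIndex d a L)}
    (hS : tailEnd ∉ S) {e : ℕ} (he : a < e) : #{x ∈ S | tailLevel x = e} < d := by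
  suffices h : #{x ∈ S | tailLevel x = e} ≤ #(univ : Finset (Fin (d - 1))) by
    rw [card_univ, Fintype.card_fin] at h
    omega
  have htail {x : TailIndex d a L} (hx : x ∈ ({x ∈ S | tailLevel x = e} : Finset _)) :
      ∃ q : Fin L × Fin (d - 1), x = Sum.inr (Sum.inl q) ∧ a + 1 + q.1 = e := by
    obtain ⟨hxS, hxe⟩ := mem_filter.1 hx
    rcases x with x | q | x
    · exact absurd hxe he.ne
    · exact ⟨q, rfl, hxe⟩
    · exact absurd hxS hS
  refine card_le_card_of_forall_subsingleton (fun x y => ∃ i, x = Sum.inr (Sum.inl (i, y)))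
    (fun x hx => ?_) fun y _ => ?_
  · obtain ⟨q, rfl, -⟩ := htail hx
    exact ⟨q.2, mem_univ _, q.1, rfl⟩
  · rintro x ⟨hx, i, rfl⟩ x' ⟨hx', i', rfl⟩
    obtain ⟨q, hq, hqe⟩ := htail hx
    obtain ⟨q', hq', hqe'⟩ := htail hx'
    obtain rfl := Sum.inl_injective (Sum.inr_injective hq)
    obtain rfl := Sum.inl_injective (Sum.inr_injective hq')
    rw [Fin.ext (by simpa using hqe.trans hqe'.symm : (i : ℕ) = i')]

theorem eq_tailEnd_of_mem_fairLabelings (hd : 0 < d) (ha : 1 ≤ a) {f : TailIndex d a L → Fin d}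
    (hf : f ∈ fairLabelings d a L) (q : Fin L × Fin (d - 1)) :
    f (Sum.inr (Sum.inl q)) = f tailEnd := by
  by_contra hq
  -- A deepest tail element outside the class of `tailEnd` shares its class and level with at most
  -- `d - 2` others, so the mass of its class cannot be a multiple of a coarser power of `d`.
  obtain ⟨q, hq, hmax⟩ := exists_max_image
    ({q | f (Sum.inr (Sum.inl q)) ≠ f tailEnd} : Finset (Fin L × Fin (d - 1)))
    (fun q => (q.1 : ℕ)) ⟨q, by simpa using hq⟩
  simp only [mem_filter, mem_univ, true_and] at hq hmax
  set S : Finset (TailIndex d a L) := {x | f x = f (Sum.inr (Sum.inl q))}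
  have hend : tailEnd ∉ S := by simpa [S] using Ne.symm hq
  have hle : ∀ x ∈ S, tailLevel x ≤ a + 1 + (q.1 : ℕ) := by
    rintro (x | x | x) hx
    · simp only [tailLevel, Sum.elim_inl]
      omega
    · have := hmax x (by rwa [(mem_filter.1 hx).2])
      simp only [tailLevel, Sum.elim_inr, Sum.elim_inl]
      omega
    · exact absurd hx hend
  have hdvd : d ∣ #{x ∈ S | tailLevel x = a + 1 + (q.1 : ℕ)} :=
    dvd_card_filter_eq_of_sum_inv_pow_eq hd.ne' hle (by omega : 1 < _)
      (by rw [mem_fairLabelings.1 hf, pow_one, one_div])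
  have hpos : 0 < #{x ∈ S | tailLevel x = a + 1 + (q.1 : ℕ)} :=
    card_pos.2 ⟨Sum.inr (Sum.inl q), mem_filter.2 ⟨mem_filter.2 ⟨mem_univ _, rfl⟩, rfl⟩⟩
  exact (card_filter_tailLevel_lt hd hend (by omega)).not_ge (Nat.le_of_dvd hpos hdvd)

theorem card_fiber_of_mem_fairLabelings (hd : 0 < d) {b : ℕ} {f : TailIndex d (b + 1) L → Fin d}
    (hf : f ∈ fairLabelings d (b + 1) L) {j : Fin d} (hj : j ≠ f tailEnd) :
    #{x | f x = j} = d ^ b := by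
  have hd0 : (d : ℝ) ≠ 0 := by positivity
  have hlev : ∀ x ∈ ({x | f x = j} : Finset (TailIndex d (b + 1) L)),
      ((d : ℝ) ^ tailLevel x)⁻¹ = ((d : ℝ) ^ (b + 1))⁻¹ := by
    rintro (x | x | x) hx
    · rfl
    · rw [mem_filter, eq_tailEnd_of_mem_fairLabelings hd b.succ_pos hf] at hx
      exact absurd hx.2.symm hj
    · exact absurd (mem_filter.1 hx).2.symm hj
  have hmass := mem_fairLabelings.1 hf j
  rw [sum_congr rfl hlev, sum_const, nsmul_eq_mul, mul_inv_eq_iff_eq_mul₀ (by positivity),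
    pow_succ (d : ℝ), one_div_mul_eq_div, mul_div_cancel_right₀ _ hd0] at hmass
  exact_mod_cast hmass

theorem prod_card_fiber_of_mem_fairLabelings {M : Type*} [CommMonoid M] (hd : 0 < d) {b : ℕ}
    {f : TailIndex d (b + 1) L → Fin d} (hf : f ∈ fairLabelings d (b + 1) L) (F : ℕ → M) :
    ∏ j, F #{x | f x = j} = F (d ^ b + L * (d - 1)) * F (d ^ b) ^ (d - 1) := by
  have hfiber {j : Fin d} (hj : j ∈ univ.erase (f tailEnd)) : #{x | f x = j} = d ^ b :=
    card_fiber_of_mem_fairLabelings hd hf (ne_of_mem_erase hj)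
  have hcard : #(univ.erase (f tailEnd)) = d - 1 := by
    rw [card_erase_of_mem (mem_univ _), card_univ, Fintype.card_fin]
  have hend : #{x | f x = f tailEnd} = d ^ b + L * (d - 1) := by
    have h := card_eq_sum_card_fiberwise (s := univ) (f := f) (t := univ) fun _ _ => mem_univ _
    rw [card_univ, card_tailIndex hd, ← add_sum_erase univ _ (mem_univ (f tailEnd)),
      sum_congr rfl fun j hj => hfiber hj, sum_const, hcard, smul_eq_mul] at h
    have hsplit : d ^ (b + 1) = d ^ b + (d - 1) * d ^ b := by
      obtain ⟨c, rfl⟩ := Nat.exists_eq_add_of_le' hd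
      rw [Nat.add_sub_cancel]
      ring
    omega
  rw [← mul_prod_erase univ _ (mem_univ (f tailEnd)), hend,
    prod_congr rfl fun j hj => by rw [hfiber hj], prod_const, hcard]

theorem card_fairLabelings_le (hd : 0 < d) (ha : 1 ≤ a) : #(fairLabelings d a L) ≤ d ^ d ^ a := by
  calc #(fairLabelings d a L) ≤ #(univ : Finset ((Fin (d ^ a - 1) → Fin d) × Fin d)) := by
        refine card_le_card_of_injOn (fun f => (fun x => f (Sum.inl x), f tailEnd))
          (fun _ _ => mem_coe.2 (mem_univ _)) fun f hf g hg hfg => ?_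
        obtain ⟨hhead, hend⟩ := Prod.mk.inj hfg
        funext x
        rcases x with x | x | _
        · exact congrFun hhead x
        · rw [eq_tailEnd_of_mem_fairLabelings hd ha hf, hend,
            eq_tailEnd_of_mem_fairLabelings hd ha hg]
        · exact hend
    _ = d ^ (d ^ a - 1) * d := by simp
    _ = d ^ d ^ a := by rw [← pow_succ, Nat.sub_add_cancel (Nat.pow_pos hd)]

theorem IsOrderedPartition.exists_label {n : ℕ} {S : Fin d → Finset (Fin n)}
    (hS : IsOrderedPartition d n S) : ∃ f : Fin n → Fin d, ∀ x j, f x = j ↔ x ∈ S j := by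
  have hmem (x : Fin n) : ∃ j, x ∈ S j := by
    simpa using Finset.ext_iff.1 hS.2 x
  choose f hf using hmem
  refine ⟨f, fun x j => ⟨fun h => h ▸ hf x, fun hx => ?_⟩⟩
  by_contra hne
  exact disjoint_left.1 (hS.1 _ _ hne) (hf x) hx

theorem IsHitter.exists_forall_mem_fairLabelings {n : ℕ} {Q : Finset (Fin d → Finset (Fin n))}
    (hQ : IsHitter d n Q) (hd : 2 ≤ d) (ha : 1 ≤ a) (hL : 1 ≤ L) (e : TailIndex d a L ≃ Fin n) :
    ∃ S ∈ Q, ∀ f : Fin n → Fin d, (∀ x j, f x = j ↔ x ∈ S j) → f ∘ e ∈ fairLabelings d a L := by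
  let μ : Fin n → ℝ := fun i => ((d : ℝ) ^ tailLevel (e.symm i))⁻¹
  have hμ : IsDadicDist d n μ :=
    ⟨fun i => by positivity, (e.symm.sum_comp fun x => ((d : ℝ) ^ tailLevel x)⁻¹).trans
      (sum_inv_pow_tailLevel (by omega)), fun i => Or.inr ⟨_, one_le_tailLevel ha _, rfl⟩⟩
  have hhead : 0 < d ^ a - 1 := Nat.sub_pos_of_lt (Nat.one_lt_pow (by omega) (by omega))
  have hne : μ (e (Sum.inl ⟨0, hhead⟩)) ≠ μ (e tailEnd) := by
    simp only [μ, Equiv.symm_apply_apply, tailEnd, tailLevel, Sum.elim_inl, Sum.elim_inr]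
    intro h
    have := pow_right_injective₀ (by positivity)
      (by exact_mod_cast (by omega : d ≠ 1) : (d : ℝ) ≠ 1) (inv_injective h)
    omega
  obtain ⟨S, hSQ, -, hmass⟩ := hQ.2 μ hμ ⟨_, _, hne⟩
  refine ⟨S, hSQ, fun f hf => mem_fairLabelings.2 fun j => ?_⟩
  rw [← hmass j]
  exact sum_equiv e (fun x => by simp [hf]) fun x _ => by simp [μ]

theorem IsHitter.pow_self_le {b n : ℕ} {Q : Finset (Fin d → Finset (Fin n))}
    (hQ : IsHitter d n Q) (hd : 2 ≤ d) (hL : 1 ≤ L) (hn : n = d ^ (b + 1) + L * (d - 1)) :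
    n ^ n ≤ (n + 1) ^ d * (#Q * (d ^ d ^ (b + 1) *
      ((d ^ b + L * (d - 1)) ^ (d ^ b + L * (d - 1)) * ((d ^ b) ^ d ^ b) ^ (d - 1)))) := by
  have hd0 : 0 < d := by omega
  have : NeZero d := ⟨hd0.ne'⟩
  have hcard : Fintype.card (TailIndex d (b + 1) L) = n := by rw [card_tailIndex hd0, hn]
  let e : TailIndex d (b + 1) L ≃ Fin n := Fintype.equivFinOfCardEq hcard
  choose! label hlabel using fun S (hS : S ∈ Q) => (hQ.1 S hS).exists_label
  have hhit (σ : Equiv.Perm (TailIndex d (b + 1) L)) :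
      ∃ f ∈ Q.image fun S => label S ∘ e, f ∘ σ ∈ fairLabelings d (b + 1) L := by
    obtain ⟨S, hS, hfair⟩ :=
      hQ.exists_forall_mem_fairLabelings hd b.succ_pos hL (σ.trans e)
    exact ⟨_, mem_image_of_mem _ hS, hfair _ (hlabel S hS)⟩
  have hbound := card_pow_self_le_of_forall_perm_exists_comp_mem
    (fun g hg => (prod_card_fiber_of_mem_fairLabelings hd0 hg fun k => k ^ k).le) hhit
  rw [hcard, Fintype.card_fin] at hbound
  refine hbound.trans ?_
  gcongr
  · exact card_image_le
  · exact card_fairLabelings_le hd0 b.succ_pos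

end Tail

section LowerBound

open Finset Filter Topology

/-- The logarithm of `n ^ n / (D ^ (D * k) * r ^ r * (k ^ k) ^ (D - 1))` divided by `k`, where
`r = k * t` and `n = r + (D - 1) * k`: the exponent of the lower bound on a hitter when the big part
has `t` times the size `k` of each other part. -/
noncomputable def tailEntropy (D t : ℝ) : ℝ :=
  (t + (D - 1)) * Real.log (t + (D - 1)) - t * Real.log t - D * Real.log D

theorem exp_mul_tailEntropy_mul_eq {d k r n : ℕ} (hd : 0 < d) (hk : 0 < k) (hr : 0 < r)
    (hn : n = r + (d - 1) * k) :
    Real.exp (k * tailEntropy d (r / k)) * ((d : ℝ) ^ (d * k) * (r ^ r * (k ^ k) ^ (d - 1))) =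
      n ^ n := by
  have : (0 : ℝ) < d := Nat.cast_pos.2 hd
  have hk' : (0 : ℝ) < k := Nat.cast_pos.2 hk
  have hr' : (0 : ℝ) < r := Nat.cast_pos.2 hr
  have hn' : (0 : ℝ) < n := Nat.cast_pos.2 (by omega)
  have hcast : (n : ℝ) = r + (d - 1) * k := by
    rw [hn, Nat.cast_add, Nat.cast_mul, Nat.cast_pred hd]
  have hratio : (r : ℝ) / k + (d - 1) = n / k := by
    rw [hcast]
    field_simp
  refine Real.log_injOn_pos (Set.mem_Ioi.2 (by positivity)) (Set.mem_Ioi.2 (by positivity)) ?_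
  rw [tailEntropy, hratio, Real.log_mul (by positivity) (by positivity),
    Real.log_mul (by positivity) (by positivity), Real.log_mul (by positivity) (by positivity),
    Real.log_exp, Real.log_div hn'.ne' hk'.ne', Real.log_div hr'.ne' hk'.ne']
  simp only [Real.log_pow, Nat.cast_mul, Nat.cast_pred hd]
  field_simp
  rw [hcast]
  ring

theorem tailEntropy_rpow {D : ℝ} (hD : 1 < D) :
    tailEntropy D (D ^ (D / (D - 1))) =
      (D ^ (D / (D - 1)) + (D - 1)) * Real.log (hitterRate D⁻¹) := by
  have hD1 : 0 < D - 1 := sub_pos.2 hD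
  set T := D ^ (D / (D - 1)) with hT
  have hT0 : 0 < T := by positivity
  have hlogT : (D - 1) * Real.log T = D * Real.log D := by
    rw [hT, Real.log_rpow (by linarith)]
    field_simp
  have hrate : hitterRate D⁻¹ = (T + (D - 1)) / T := by
    rw [hitterRate_inv hD, ← hT]
    field_simp
  rw [tailEntropy, hrate, Real.log_div (by positivity) hT0.ne', ← hlogT]
  ring

theorem eventually_mul_log_lt_tailEntropy {D c : ℝ} (hD : 1 < D) (hc0 : 0 < c)
    (hc : c < hitterRate D⁻¹) :
    ∀ᶠ t in 𝓝 (D ^ (D / (D - 1))), (t + (D - 1)) * Real.log c < tailEntropy D t := by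
  have : 0 < D - 1 := sub_pos.2 hD
  have hT : D ^ (D / (D - 1)) ≠ 0 := by positivity
  have hT' : D ^ (D / (D - 1)) + (D - 1) ≠ 0 := by positivity
  refine ContinuousAt.eventually_lt (by fun_prop)
    (by unfold tailEntropy; fun_prop (disch := assumption)) ?_
  rw [tailEntropy_rpow hD]
  exact mul_lt_mul_of_pos_left (Real.log_lt_log hc0 hc) (by positivity)

theorem exists_tendsto_add_mul_div_pow {d : ℕ} (hd : 2 ≤ d) {T : ℝ} (hT : 1 < T) :
    ∃ L : ℕ → ℕ, (∀ᶠ b in atTop, 1 ≤ L b) ∧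
      Tendsto (fun b => ((d ^ b + L b * (d - 1) : ℕ) : ℝ) / (d ^ b : ℕ)) atTop (𝓝 T) := by
  have hd0 : 0 < d := by omega
  have hd1 : (1 : ℝ) < d := by exact_mod_cast hd
  have hs : 0 < (T - 1) / (d - 1) := div_pos (sub_pos.2 hT) (sub_pos.2 hd1)
  have hpow : Tendsto (fun b : ℕ => (d : ℝ) ^ b) atTop atTop :=
    tendsto_pow_atTop_atTop_of_one_lt hd1
  have hfloor := (tendsto_nat_floor_mul_div_atTop hs.le).comp hpow
  refine ⟨fun b => ⌊(T - 1) / (d - 1) * (d : ℝ) ^ b⌋₊, ?_, ?_⟩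
  · filter_upwards [(hpow.const_mul_atTop hs).eventually_ge_atTop 1] with b hb
    exact Nat.le_floor (by exact_mod_cast hb)
  · have hlim := (hfloor.mul_const ((d : ℝ) - 1)).const_add 1
    rw [div_mul_cancel₀ _ (sub_pos.2 hd1).ne', add_sub_cancel] at hlim
    refine hlim.congr fun b => ?_
    have : (d : ℝ) ^ b ≠ 0 := by positivity
    simp only [Function.comp_apply, Nat.cast_add, Nat.cast_mul, Nat.cast_pow, Nat.cast_pred hd0]
    field_simp

theorem IsHitter.pow_le_mul_card {d b L n : ℕ} {Q : Finset (Fin d → Finset (Fin n))}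
    (hQ : IsHitter d n Q) (hd : 2 ≤ d) (hL : 1 ≤ L) (hn : n = d ^ (b + 1) + L * (d - 1)) {c : ℝ}
    (hc0 : 0 < c)
    (hc : (((d ^ b + L * (d - 1) : ℕ) : ℝ) / (d ^ b : ℕ) + (d - 1)) * Real.log c ≤
      tailEntropy d (((d ^ b + L * (d - 1) : ℕ) : ℝ) / (d ^ b : ℕ))) :
    c ^ n ≤ ((n : ℝ) + 1) ^ d * #Q := by
  have hd0 : 0 < d := by omega
  have hk : 0 < d ^ b := Nat.pow_pos hd0
  have hpow := hQ.pow_self_le hd hL hn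
  have hn' : n = d ^ b + L * (d - 1) + (d - 1) * d ^ b := by
    rw [hn, pow_succ']
    nth_rw 1 [← Nat.sub_add_cancel hd0]
    ring
  rw [pow_succ'] at hpow
  set r := d ^ b + L * (d - 1)
  set k := d ^ b
  have hr : 0 < r := Nat.add_pos_left hk _
  have hcast : (n : ℝ) = k * (r / k + (d - 1)) := by
    rw [hn', Nat.cast_add, Nat.cast_mul, Nat.cast_pred hd0]
    field_simp
  have hexp : c ^ n ≤ Real.exp (k * tailEntropy d (r / k)) := by
    rw [← Real.exp_log (pow_pos hc0 n), Real.log_pow, hcast, mul_assoc]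
    gcongr
  refine hexp.trans (le_of_mul_le_mul_right ?_
    (by positivity : (0 : ℝ) < d ^ (d * k) * (r ^ r * (k ^ k) ^ (d - 1))))
  rw [exp_mul_tailEntropy_mul_eq hd0 hk hr hn', mul_assoc]
  exact_mod_cast hpow

theorem frequently_pow_le_card_of_isHitter {d : ℕ} (hd : 2 ≤ d) {c : ℝ} (hc0 : 0 < c)
    (hc : c < hitterRate (d : ℝ)⁻¹) :
    ∃ᶠ n : ℕ in atTop, ∀ Q, IsHitter d n Q → c ^ n ≤ (#Q : ℝ) := by
  have hd1 : (1 : ℝ) < d := by exact_mod_cast hd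
  have : (0 : ℝ) < d - 1 := sub_pos.2 hd1
  obtain ⟨c', hcc', hc'⟩ := exists_between hc
  obtain ⟨L, hL, hlim⟩ := exists_tendsto_add_mul_div_pow hd
    (Real.one_lt_rpow hd1 (by positivity : 0 < (d : ℝ) / (d - 1)))
  have hn : Tendsto (fun b : ℕ => d ^ (b + 1) + L b * (d - 1)) atTop atTop :=
    tendsto_atTop_mono (fun b => (b.le_succ.trans
      (Nat.lt_pow_self (by omega : 1 < d)).le).trans (Nat.le_add_right _ _)) tendsto_id
  refine hn.frequently (Eventually.frequently ?_)
  filter_upwards [hL, hn.eventually (eventually_natCast_add_pow_le_exp d 1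
      (Real.log_pos ((one_lt_div hc0).2 hcc'))),
    hlim.eventually (eventually_mul_log_lt_tailEntropy hd1 (hc0.trans hcc') hc')]
    with b hLb hpoly hentropy
  generalize hnb : d ^ (b + 1) + L b * (d - 1) = n at hpoly ⊢
  intro Q hQ
  have hpow := hQ.pow_le_mul_card hd hLb hnb.symm (hc0.trans hcc') hentropy.le
  rw [mul_comm _ (n : ℝ), Real.exp_nat_mul, Real.exp_log (div_pos (hc0.trans hcc') hc0)] at hpoly
  refine le_of_mul_le_mul_left ?_ (pow_pos (div_pos (hc0.trans hcc') hc0) n)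
  calc (c' / c) ^ n * c ^ n = c' ^ n := by rw [← mul_pow, div_mul_cancel₀ _ hc0.ne']
    _ ≤ ((n : ℝ) + 1) ^ d * #Q := hpow
    _ ≤ (c' / c) ^ n * #Q := by gcongr

theorem qd_le_card_of_isHitter {d n : ℕ} {Q : Finset (Fin d → Finset (Fin n))}
    (hQ : IsHitter d n Q) : qd d n ≤ #Q :=
  Nat.sInf_le ⟨Q, hQ, rfl⟩

theorem IsHitter.exists_card_eq_qd {d n : ℕ} {Q : Finset (Fin d → Finset (Fin n))}
    (hQ : IsHitter d n Q) : ∃ Q', IsHitter d n Q' ∧ #Q' = qd d n :=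
  Nat.sInf_mem (s := {m | ∃ Q', IsHitter d n Q' ∧ #Q' = m}) ⟨_, Q, hQ, rfl⟩

end LowerBound

/-- `q^{(d)}(n) ≤ C_d^{n+o(n)}` for all `n`, and this is tight (up to sub-exponential
factors) for infinitely many `n`, where `C_d = 1 + (d-1)/d^{d/(d-1)}`. -/
theorem qd_bounds (d : ℕ) (hd : 2 ≤ d) :
    ∀ ε > (0 : ℝ),
      (∃ N : ℕ, ∀ n : ℕ, N ≤ n →
        (qd d n : ℝ) ≤
          ((1 + ((d : ℝ) - 1) / (d : ℝ) ^ ((d : ℝ) / ((d : ℝ) - 1))) * (2 : ℝ) ^ ε) ^ n) ∧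
      (∀ N : ℕ, ∃ n : ℕ, N ≤ n ∧
        ((1 + ((d : ℝ) - 1) / (d : ℝ) ^ ((d : ℝ) / ((d : ℝ) - 1))) * (2 : ℝ) ^ (-ε)) ^ n ≤
          (qd d n : ℝ)) := by
  intro ε hε
  have hd1 : (1 : ℝ) < d := by exact_mod_cast hd
  rw [← hitterRate_inv hd1]
  have hrate : 0 < hitterRate (d : ℝ)⁻¹ :=
    hitterRate_pos (inv_pos.2 (one_pos.trans hd1)) (inv_lt_one_of_one_lt₀ hd1)
  have hupper := eventually_exists_isHitter_card_le_pow hd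
    (lt_mul_of_one_lt_right hrate (Real.one_lt_rpow one_lt_two hε))
  have hlower := frequently_pow_le_card_of_isHitter hd (by positivity)
    (mul_lt_of_lt_one_right hrate (Real.rpow_lt_one_of_one_lt_of_neg one_lt_two (neg_lt_zero.2 hε)))
  refine ⟨Filter.eventually_atTop.1 (hupper.mono fun n ⟨Q, hQ, hcard⟩ =>
    le_trans (Nat.cast_le.2 (qd_le_card_of_isHitter hQ)) hcard), fun N => ?_⟩
  obtain ⟨n, hbound, ⟨Q, hQ, -⟩, hN⟩ :=
    (hlower.and_eventually (hupper.and (Filter.eventually_ge_atTop N))).exists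
  obtain ⟨Q', hQ', hcard⟩ := hQ.exists_card_eq_qd
  exact ⟨n, hN, hcard ▸ hbound Q' hQ'⟩
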